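/- arXiv:2605.13273 — 9 statements merged into one kernel-verified Lean document; each statement's English description precedes it below -/
import Mathlib

section
/- Let E be a nontrivial real inner product space and let A : E ≃L[ℝ] E be a continuous linear equivalence; set C := max(‖A‖, ‖A⁻¹‖) (operator norms). Then for every ε > 0 and all unit vectors v₁, v₂ ∈ E with ∠(v₁, v₂) < ε / C², one has ‖A v₁‖ < exp(ε) · ‖A v₂‖. -/
open Real InnerProductGeometry

/-!
On a sphere of radius `r`, vectors at angle `θ` are at distance at most `r * θ`. A map that is
`K`-Lipschitz, `L`-antilipschitz and fixes `0` therefore moves their images apart by at most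
`K * r * θ`, while each image has norm at least `r / L`. So the ratio of the norms of the images is
at most `1 + K * L * θ`, and `1 + ε ≤ exp ε`.
-/

section AlmostParallel

variable {E F : Type*} [NormedAddCommGroup E] [InnerProductSpace ℝ E] [SeminormedAddCommGroup F]

theorem norm_sub_le_norm_mul_angle {v w : E} (hvw : ‖v‖ = ‖w‖) :
    ‖v - w‖ ≤ ‖w‖ * angle v w := by
  refine le_of_sq_le_sq ?_ (mul_nonneg (norm_nonneg w) (angle_nonneg v w))
  calc ‖v - w‖ ^ 2 = 2 * ‖w‖ ^ 2 * (1 - cos (angle v w)) := by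
        rw [norm_sub_sq_real, ← cos_angle_mul_norm_mul_norm, hvw]
        ring
    _ ≤ 2 * ‖w‖ ^ 2 * (angle v w ^ 2 / 2) := by
        gcongr
        linarith [one_sub_sq_div_two_le_cos (x := angle v w)]
    _ = (‖w‖ * angle v w) ^ 2 := by ring

theorem norm_map_le_one_add_mul_angle_mul_norm_map {f : E → F} {K L : NNReal}
    (hf : LipschitzWith K f) (hf' : AntilipschitzWith L f) (hf0 : f 0 = 0)
    {v w : E} (hvw : ‖v‖ = ‖w‖) :
    ‖f v‖ ≤ (1 + K * L * angle v w) * ‖f w‖ :=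
  calc ‖f v‖ ≤ ‖f w‖ + ‖f v - f w‖ := norm_le_norm_add_norm_sub' _ _
    _ ≤ ‖f w‖ + K * ‖v - w‖ := by gcongr; exact hf.norm_sub_le v w
    _ ≤ ‖f w‖ + K * (‖w‖ * angle v w) := by gcongr; exact norm_sub_le_norm_mul_angle hvw
    _ ≤ ‖f w‖ + K * (L * ‖f w‖ * angle v w) := by
        gcongr
        · exact angle_nonneg v w
        · exact hf'.le_mul_norm hf0 w
    _ = (1 + K * L * angle v w) * ‖f w‖ := by ring

theorem stmt0_general {f : E → F} {K L : NNReal}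
    (hf : LipschitzWith K f) (hf' : AntilipschitzWith L f) (hf0 : f 0 = 0)
    {ε : ℝ} {v w : E} (hvw : ‖v‖ = ‖w‖) (hw : w ≠ 0) (hangle : K * L * angle v w < ε) :
    ‖f v‖ < exp ε * ‖f w‖ := by
  have hfw : 0 < ‖f w‖ :=
    pos_of_mul_pos_right ((norm_pos_iff.2 hw).trans_le (hf'.le_mul_norm hf0 w)) L.2
  calc ‖f v‖ ≤ (1 + K * L * angle v w) * ‖f w‖ :=
        norm_map_le_one_add_mul_angle_mul_norm_map hf hf' hf0 hvw
    _ < (1 + ε) * ‖f w‖ := by gcongr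
    _ ≤ exp ε * ‖f w‖ := by
        gcongr
        linarith [add_one_le_exp ε]

end AlmostParallel

/-- Let `E` be a nontrivial real inner product space and `A : E ≃L[ℝ] E` a
continuous linear equivalence; set `C := max(‖A‖, ‖A⁻¹‖)` (operator norms). Then for every
`ε > 0` and all unit vectors `v₁, v₂ ∈ E` with `∠(v₁, v₂) < ε / C²`, one has
`‖A v₁‖ < exp ε * ‖A v₂‖`. -/
theorem stmt0 {E : Type*} [NormedAddCommGroup E] [InnerProductSpace ℝ E] [Nontrivial E]
    (A : E ≃L[ℝ] E) (C : ℝ)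
    (hC : C = max ‖(A : E →L[ℝ] E)‖ ‖(A.symm : E →L[ℝ] E)‖)
    (ε : ℝ) (hε : 0 < ε) (v₁ v₂ : E) (hv₁ : ‖v₁‖ = 1) (hv₂ : ‖v₂‖ = 1)
    (hangle : angle v₁ v₂ < ε / C ^ 2) :
    ‖A v₁‖ < Real.exp ε * ‖A v₂‖ := by
  have hA : ‖(A : E →L[ℝ] E)‖ ≤ C := hC ▸ le_max_left _ _
  have hA' : ‖(A.symm : E →L[ℝ] E)‖ ≤ C := hC ▸ le_max_right _ _
  have hC0 : 0 < C := A.norm_pos.trans_le hA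
  refine stmt0_general A.lipschitz A.antilipschitz (map_zero A) (hv₁.trans hv₂.symm)
    (norm_ne_zero_iff.1 (hv₂ ▸ one_ne_zero)) ?_
  calc ‖(A : E →L[ℝ] E)‖ * ‖(A.symm : E →L[ℝ] E)‖ * angle v₁ v₂ ≤ C * C * angle v₁ v₂ := by
        gcongr
        exact angle_nonneg v₁ v₂
    _ = angle v₁ v₂ * C ^ 2 := by ring
    _ < ε := (lt_div_iff₀ (by positivity)).1 hangle
end

section
/- Let E be a real inner product space and let A : E ≃L[ℝ] E be a continuous linear equivalence. For all linearly independent vectors v₁, v₂ ∈ E one has ‖A‖⁻² · ‖A⁻¹‖⁻² · sin ∠(v₁, v₂) ≤ sin ∠(A v₁, A v₂) ≤ ‖A‖² · ‖A⁻¹‖² · sin ∠(v₁, v₂). Consequently, setting L := 4·(log max(‖A‖, ‖A⁻¹‖) + 1), if in addition both ∠(v₁, v₂) and ∠(A v₁, A v₂) lie in the interval [0, π/2], then exp(−L) · ∠(v₁, v₂) ≤ ∠(A v₁, A v₂) ≤ exp(L) · ∠(v₁, v₂). -/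
open Real InnerProductGeometry

/-!
The quantity `sin ∠(x, y) * ‖x‖` is the distance from `x` to the line spanned by `y`. A linear
equivalence `A` maps lines to lines and stretches distances by at most `‖A‖`, while
`‖x‖ ≤ ‖A⁻¹‖ * ‖A x‖`; hence `sin ∠(A x, A y) ≤ ‖A‖ * ‖A⁻¹‖ * sin ∠(x, y)`. The lower bounds are
the upper bounds for `A⁻¹`. On `[0, π / 2]` an angle and its sine differ by a factor of at most
`π / 2`, which is absorbed by the summand `1` in `L`.
-/

section DistanceToLine

variable {E : Type*} [NormedAddCommGroup E] [InnerProductSpace ℝ E]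

lemma norm_sub_smul_sq_eq_sin_sq_add (x y : E) (t : ℝ) :
    ‖x - t • y‖ ^ 2 =
      (sin (angle x y) * ‖x‖) ^ 2 + (t * ‖y‖ - cos (angle x y) * ‖x‖) ^ 2 := by
  have expansion : ‖x - t • y‖ ^ 2 =
      ‖x‖ ^ 2 - 2 * (t * (cos (angle x y) * (‖x‖ * ‖y‖))) + t ^ 2 * ‖y‖ ^ 2 := by
    rw [norm_sub_sq_real, inner_smul_right, cos_angle_mul_norm_mul_norm, norm_smul, mul_pow,
      norm_eq_abs, sq_abs]
  linear_combination expansion - ‖x‖ ^ 2 * sin_sq_add_cos_sq (angle x y)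

lemma sin_angle_mul_norm_le_norm_sub_smul (x y : E) (t : ℝ) :
    sin (angle x y) * ‖x‖ ≤ ‖x - t • y‖ := by
  refine le_of_sq_le_sq ?_ (norm_nonneg _)
  rw [norm_sub_smul_sq_eq_sin_sq_add]
  exact le_add_of_nonneg_right (sq_nonneg _)

lemma exists_norm_sub_smul_eq_sin_angle_mul_norm (x : E) {y : E} (hy : y ≠ 0) :
    ∃ t : ℝ, ‖x - t • y‖ = sin (angle x y) * ‖x‖ := by
  have sin_mul_nonneg : 0 ≤ sin (angle x y) * ‖x‖ :=
    mul_nonneg (sin_angle_nonneg x y) (norm_nonneg x)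
  refine ⟨cos (angle x y) * ‖x‖ / ‖y‖, (sq_eq_sq₀ (norm_nonneg _) sin_mul_nonneg).1 ?_⟩
  rw [norm_sub_smul_sq_eq_sin_sq_add, div_mul_cancel₀ _ (norm_ne_zero_iff.2 hy), sub_self,
    zero_pow two_ne_zero, add_zero]

end DistanceToLine

section RealBounds

lemma le_pi_div_two_mul_of_sin_le_mul_sin {θ φ K : ℝ} (hθ : 0 ≤ θ) (hφ : φ ∈ Set.Icc 0 (π / 2))
    (hK : 0 ≤ K) (h : sin φ ≤ K * sin θ) : φ ≤ π / 2 * K * θ := by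
  have jordan : 2 / π * φ ≤ sin φ := mul_le_sin hφ.1 hφ.2
  calc φ = π / 2 * (2 / π * φ) := by field_simp
    _ ≤ π / 2 * (K * sin θ) := by gcongr π / 2 * ?_; exact jordan.trans h
    _ ≤ π / 2 * (K * θ) := by gcongr; exact sin_le hθ
    _ = π / 2 * K * θ := by ring

lemma pi_div_two_mul_le_exp_log_max {a b : ℝ} (ha : 0 < a) (hab : 1 ≤ a * b) :
    π / 2 * (a * b) ≤ exp (4 * (log (max a b) + 1)) := by
  have hb : 0 < b := pos_of_mul_pos_right (one_pos.trans_le hab) ha.le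
  have max_pos : 0 < max a b := lt_max_of_lt_left ha
  have pi_div_two_le : π / 2 ≤ exp 4 := by linarith [add_one_le_exp (4 : ℝ), pi_le_four]
  have mul_le : a * b ≤ max a b ^ 4 :=
    calc a * b ≤ (a * b) ^ 2 := le_self_pow₀ hab two_ne_zero
      _ ≤ (max a b * max a b) ^ 2 := by
        gcongr
        exacts [le_max_left a b, le_max_right a b]
      _ = max a b ^ 4 := by ring
  calc π / 2 * (a * b) ≤ exp 4 * max a b ^ 4 := by gcongr
    _ = exp (4 * (log (max a b) + 1)) := by
      rw [mul_add, mul_one, exp_add, mul_comm, ← exp_log (pow_pos max_pos 4), log_pow]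
      norm_cast

end RealBounds

section Distortion

variable {E F : Type*} [NormedAddCommGroup E] [InnerProductSpace ℝ E]
  [NormedAddCommGroup F] [InnerProductSpace ℝ F] (A : E ≃L[ℝ] F) {x y : E}

lemma sin_angle_map_le (hx : x ≠ 0) (hy : y ≠ 0) :
    sin (angle (A x) (A y)) ≤
      ‖(A : E →L[ℝ] F)‖ * ‖(A.symm : F →L[ℝ] E)‖ * sin (angle x y) := by
  have norm_le : ‖x‖ ≤ ‖(A.symm : F →L[ℝ] E)‖ * ‖A x‖ := by
    simpa using (A.symm : F →L[ℝ] E).le_opNorm (A x)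
  have sin_nonneg : 0 ≤ sin (angle x y) := sin_angle_nonneg x y
  obtain ⟨t, ht⟩ := exists_norm_sub_smul_eq_sin_angle_mul_norm x hy
  refine le_of_mul_le_mul_right ?_ (norm_pos_iff.2 (A.map_ne_zero_iff.2 hx))
  calc sin (angle (A x) (A y)) * ‖A x‖
      ≤ ‖A x - t • A y‖ := sin_angle_mul_norm_le_norm_sub_smul _ _ t
    _ = ‖(A : E →L[ℝ] F) (x - t • y)‖ := by simp
    _ ≤ ‖(A : E →L[ℝ] F)‖ * ‖x - t • y‖ := ContinuousLinearMap.le_opNorm _ _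
    _ = ‖(A : E →L[ℝ] F)‖ * (sin (angle x y) * ‖x‖) := by rw [ht]
    _ ≤ ‖(A : E →L[ℝ] F)‖ * (sin (angle x y) * (‖(A.symm : F →L[ℝ] E)‖ * ‖A x‖)) := by gcongr
    _ = ‖(A : E →L[ℝ] F)‖ * ‖(A.symm : F →L[ℝ] E)‖ * sin (angle x y) * ‖A x‖ := by ring

lemma sin_angle_map_le_norm_sq (hx : x ≠ 0) (hy : y ≠ 0) :
    sin (angle (A x) (A y)) ≤
      ‖(A : E →L[ℝ] F)‖ ^ 2 * ‖(A.symm : F →L[ℝ] E)‖ ^ 2 * sin (angle x y) := by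
  have : Nontrivial E := nontrivial_of_ne x 0 hx
  refine (sin_angle_map_le A hx hy).trans ?_
  rw [← mul_pow]
  gcongr
  · exact sin_angle_nonneg x y
  · exact le_self_pow₀ A.one_le_norm_mul_norm_symm two_ne_zero

lemma angle_map_le_exp_mul_angle (hx : x ≠ 0) (hy : y ≠ 0) (h : angle (A x) (A y) ≤ π / 2) :
    angle (A x) (A y) ≤
      exp (4 * (log (max ‖(A : E →L[ℝ] F)‖ ‖(A.symm : F →L[ℝ] E)‖) + 1)) * angle x y := by
  have : Nontrivial E := nontrivial_of_ne x 0 hx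
  calc angle (A x) (A y)
      ≤ π / 2 * (‖(A : E →L[ℝ] F)‖ * ‖(A.symm : F →L[ℝ] E)‖) * angle x y :=
        le_pi_div_two_mul_of_sin_le_mul_sin (angle_nonneg x y) ⟨angle_nonneg _ _, h⟩
          (by positivity) (sin_angle_map_le A hx hy)
    _ ≤ _ := by
      gcongr
      · exact angle_nonneg x y
      · exact pi_div_two_mul_le_exp_log_max A.norm_pos A.one_le_norm_mul_norm_symm

end Distortion

theorem stmt1_general {E F : Type*} [NormedAddCommGroup E] [InnerProductSpace ℝ E]
    [NormedAddCommGroup F] [InnerProductSpace ℝ F]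
    (A : E ≃L[ℝ] F) {v₁ v₂ : E} (hv₁ : v₁ ≠ 0) (hv₂ : v₂ ≠ 0)
    (L : ℝ)
    (hL : L = 4 * (log (max ‖(A : E →L[ℝ] F)‖ ‖(A.symm : F →L[ℝ] E)‖) + 1)) :
    ((‖(A : E →L[ℝ] F)‖ ^ 2)⁻¹ * (‖(A.symm : F →L[ℝ] E)‖ ^ 2)⁻¹ * sin (angle v₁ v₂)
        ≤ sin (angle (A v₁) (A v₂)) ∧
      sin (angle (A v₁) (A v₂))
        ≤ ‖(A : E →L[ℝ] F)‖ ^ 2 * ‖(A.symm : F →L[ℝ] E)‖ ^ 2 * sin (angle v₁ v₂)) ∧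
    (angle v₁ v₂ ∈ Set.Icc 0 (π / 2) → angle (A v₁) (A v₂) ∈ Set.Icc 0 (π / 2) →
      exp (-L) * angle v₁ v₂ ≤ angle (A v₁) (A v₂) ∧
        angle (A v₁) (A v₂) ≤ exp L * angle v₁ v₂) := by
  subst hL
  have hAv₁ : A v₁ ≠ 0 := A.map_ne_zero_iff.2 hv₁
  have hAv₂ : A v₂ ≠ 0 := A.map_ne_zero_iff.2 hv₂
  refine ⟨⟨?_, sin_angle_map_le_norm_sq A hv₁ hv₂⟩,
    fun hv hAv ↦ ⟨?_, angle_map_le_exp_mul_angle A hv₁ hv₂ hAv.2⟩⟩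
  · rw [← mul_inv]
    refine inv_mul_le_of_le_mul₀ (by positivity) (sin_angle_nonneg _ _) ?_
    simpa [mul_comm] using sin_angle_map_le_norm_sq A.symm hAv₁ hAv₂
  · rw [exp_neg]
    refine inv_mul_le_of_le_mul₀ (exp_nonneg _) (angle_nonneg _ _) ?_
    simpa [max_comm] using angle_map_le_exp_mul_angle A.symm hAv₁ hAv₂ (by simpa using hv.2)

/-- One-step angle-distortion estimate for a continuous linear equivalence
`A : E ≃L[ℝ] E` of a real inner product space: for linearly independent `v₁, v₂`,
`‖A‖⁻² ‖A⁻¹‖⁻² sin ∠(v₁,v₂) ≤ sin ∠(A v₁, A v₂) ≤ ‖A‖² ‖A⁻¹‖² sin ∠(v₁,v₂)`, and consequently,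
with `L := 4 (log max(‖A‖,‖A⁻¹‖) + 1)`, if both `∠(v₁,v₂)` and `∠(A v₁, A v₂)` lie in
`[0, π/2]`, then `exp (−L) ∠(v₁,v₂) ≤ ∠(A v₁, A v₂) ≤ exp L ∠(v₁,v₂)`. -/
theorem stmt1 {E : Type*} [NormedAddCommGroup E] [InnerProductSpace ℝ E]
    (A : E ≃L[ℝ] E) (v₁ v₂ : E) (hli : LinearIndependent ℝ ![v₁, v₂])
    (L : ℝ)
    (hL : L = 4 * (Real.log (max ‖(A : E →L[ℝ] E)‖ ‖(A.symm : E →L[ℝ] E)‖) + 1)) :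
    ((‖(A : E →L[ℝ] E)‖ ^ 2)⁻¹ * (‖(A.symm : E →L[ℝ] E)‖ ^ 2)⁻¹ * Real.sin (angle v₁ v₂)
        ≤ Real.sin (angle (A v₁) (A v₂)) ∧
      Real.sin (angle (A v₁) (A v₂))
        ≤ ‖(A : E →L[ℝ] E)‖ ^ 2 * ‖(A.symm : E →L[ℝ] E)‖ ^ 2 * Real.sin (angle v₁ v₂)) ∧
    (angle v₁ v₂ ∈ Set.Icc 0 (π / 2) → angle (A v₁) (A v₂) ∈ Set.Icc 0 (π / 2) →
      Real.exp (-L) * angle v₁ v₂ ≤ angle (A v₁) (A v₂) ∧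
        angle (A v₁) (A v₂) ≤ Real.exp L * angle v₁ v₂) :=
  stmt1_general A (hli.ne_zero 0) (hli.ne_zero 1) L hL
end

section
/- Let E be a real inner product space, let θ ∈ (0, π/2], and let v₁, v₂ ∈ E be nonzero vectors such that θ ≤ ∠(v₁, v₂) ≤ π − θ. Then ‖v₁‖ + ‖v₂‖ ≤ √2 · (1 − cos θ)^{−1/2} · ‖v₁ + v₂‖. -/
open Real InnerProductGeometry

/-!
Halving the angle `α = ∠(v, w)` turns the law of cosines into a sum of two squares,
`‖v + w‖² = ((‖v‖ + ‖w‖) cos (α / 2))² + ((‖v‖ - ‖w‖) sin (α / 2))²`.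
Dropping the second one gives `(‖v‖ + ‖w‖) cos (α / 2) ≤ ‖v + w‖`. If `α ≤ π - θ`, then
`cos (α / 2) ≥ sin (θ / 2)`, and `√2 (1 - cos θ)^(-1/2)` is the reciprocal of `sin (θ / 2)`.
-/

theorem sqrt_two_mul_one_sub_cos_rpow_eq_inv_sin_half {θ : ℝ} (hθ₀ : 0 ≤ θ) (hθ : θ ≤ 2 * π) :
    √2 * (1 - cos θ) ^ (-(1 : ℝ) / 2) = (sin (θ / 2))⁻¹ := by
  have one_sub_cos_nonneg : 0 ≤ 1 - cos θ := sub_nonneg.mpr (cos_le_one θ)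
  rw [sin_half_eq_sqrt hθ₀ hθ, sqrt_div one_sub_cos_nonneg, inv_div, neg_div,
    rpow_neg one_sub_cos_nonneg, ← sqrt_eq_rpow, div_eq_mul_inv]

section

variable {E : Type*} [NormedAddCommGroup E] [InnerProductSpace ℝ E]

theorem norm_add_sq_eq_sq_cos_half_angle_add_sq_sin_half_angle (v w : E) :
    ‖v + w‖ ^ 2 =
      ((‖v‖ + ‖w‖) * cos (angle v w / 2)) ^ 2 + ((‖v‖ - ‖w‖) * sin (angle v w / 2)) ^ 2 := by
  have cos_angle_eq : cos (angle v w) = 2 * cos (angle v w / 2) ^ 2 - 1 := by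
    rw [← cos_two_mul, mul_div_cancel₀ _ two_ne_zero]
  rw [norm_add_sq_real, ← cos_angle_mul_norm_mul_norm, cos_angle_eq, mul_pow, mul_pow, sin_sq]
  ring

theorem norm_add_norm_mul_cos_half_angle_le_norm_add (v w : E) :
    (‖v‖ + ‖w‖) * cos (angle v w / 2) ≤ ‖v + w‖ := by
  refine le_of_sq_le_sq ?_ (norm_nonneg _)
  rw [norm_add_sq_eq_sq_cos_half_angle_add_sq_sin_half_angle]
  exact le_add_of_nonneg_right (sq_nonneg _)

theorem sin_half_le_cos_half_angle {θ : ℝ} {v w : E} (hθ : 0 ≤ θ) (h : angle v w ≤ π - θ) :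
    sin (θ / 2) ≤ cos (angle v w / 2) := by
  rw [← cos_pi_div_two_sub]
  apply cos_le_cos_of_nonneg_of_le_pi <;> linarith [angle_nonneg v w, pi_pos]

theorem stmt2_general {θ : ℝ} (hθ : 0 < θ) {v w : E} (h : angle v w ≤ π - θ) :
    ‖v‖ + ‖w‖ ≤ √2 * (1 - cos θ) ^ (-(1 : ℝ) / 2) * ‖v + w‖ := by
  have hθπ : θ ≤ π := by linarith [angle_nonneg v w]
  have sin_half_pos : 0 < sin (θ / 2) := sin_pos_of_pos_of_lt_pi (by linarith) (by linarith)
  rw [sqrt_two_mul_one_sub_cos_rpow_eq_inv_sin_half hθ.le (by linarith),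
    le_inv_mul_iff₀' sin_half_pos]
  calc (‖v‖ + ‖w‖) * sin (θ / 2)
    _ ≤ (‖v‖ + ‖w‖) * cos (angle v w / 2) := by
      gcongr
      exact sin_half_le_cos_half_angle hθ.le h
    _ ≤ ‖v + w‖ := norm_add_norm_mul_cos_half_angle_le_norm_add v w

end

/-- Let `E` be a real inner product space, `θ ∈ (0, π/2]`, and `v₁, v₂ ∈ E`
nonzero vectors with `θ ≤ ∠(v₁, v₂) ≤ π − θ`. Then
`‖v₁‖ + ‖v₂‖ ≤ √2 · (1 − cos θ)^{−1/2} · ‖v₁ + v₂‖`. -/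
theorem stmt2 {E : Type*} [NormedAddCommGroup E] [InnerProductSpace ℝ E]
    (θ : ℝ) (hθ : θ ∈ Set.Ioc 0 (π / 2)) (v₁ v₂ : E) (hv₁ : v₁ ≠ 0) (hv₂ : v₂ ≠ 0)
    (h₁ : θ ≤ angle v₁ v₂) (h₂ : angle v₁ v₂ ≤ π - θ) :
    ‖v₁‖ + ‖v₂‖ ≤ Real.sqrt 2 * (1 - Real.cos θ) ^ (-(1 : ℝ) / 2) * ‖v₁ + v₂‖ := by
  exact stmt2_general hθ.1 h₂
end

section
/- Let (X, μ) be a probability space and T : X → X a measurable bijection with measurable inverse such that T preserves μ. For a measurable set A ⊆ X define the backward hitting time τ_A : X → ℕ ∪ {∞} by τ_A(x) := inf { t ∈ ℕ : t ≥ 1 and T^{−t}(x) ∈ A } (with τ_A(x) = ∞ if no such t exists). Then the Lebesgue integral of τ_A over the set T⁻¹(A) \ A (with values in [0,∞]) satisfies ∫_{T⁻¹(A) \ A} τ_A dμ ≤ μ(X \ A), where T⁻¹(A) = { x ∈ X : T(x) ∈ A }. -/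
open MeasureTheory
open scoped ENNReal

/-!
For `x ∉ A` the hitting time `τ x` counts the `t` for which `x, T⁻¹ x, …, T⁻ᵗ x` all avoid `A`, so
the integral is the sum over `t` of the measures of `{x ∈ T⁻¹ A : x, T⁻¹ x, …, T⁻ᵗ x ∉ A}`. Pulled
back by `Tᵗ`, which preserves the measure, this set becomes the set of points outside `A` whose
forward orbit first enters `A` at time `t + 1`. These sets are disjoint and contained in `Aᶜ`.
-/

section HittingTime

variable {X : Type*} {S T : X → X} {A B : Set X} {x : X}

/-- The first time `t ≥ 1` at which the orbit of `x` under `S` is in `A`, with value `∞` if there is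
no such time. The backward hitting time of an invertible map is the case where `S` is its
inverse. -/
noncomputable def hittingTime (S : X → X) (A : Set X) (x : X) : ℝ≥0∞ :=
  sInf ((fun t : ℕ => (t : ℝ≥0∞)) '' {t : ℕ | 1 ≤ t ∧ S^[t] x ∈ A})

/-- The points whose orbit under `S` avoids `A` at all times `0, …, t`, both ends included. -/
def avoidUntil (S : X → X) (A : Set X) (t : ℕ) : Set X :=
  {x | ∀ s ≤ t, S^[s] x ∉ A}

theorem avoidUntil_subset_compl (t : ℕ) : avoidUntil S A t ⊆ Aᶜ :=
  fun _ hx => hx 0 t.zero_le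

theorem mem_avoidUntil_iff_lt {n t : ℕ} (hn : S^[n] x ∈ A) (hmin : ∀ s < n, S^[s] x ∉ A) :
    x ∈ avoidUntil S A t ↔ t < n :=
  ⟨fun hx => not_le.1 fun hnt => hx n hnt hn, fun htn s hst => hmin s (hst.trans_lt htn)⟩

theorem hittingTime_eq_natCast {n : ℕ} (hn_pos : 1 ≤ n) (hn : S^[n] x ∈ A)
    (hmin : ∀ s, 1 ≤ s → s < n → S^[s] x ∉ A) : hittingTime S A x = n := by
  refine le_antisymm (sInf_le ⟨n, ⟨hn_pos, hn⟩, rfl⟩) (le_sInf ?_)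
  rintro _ ⟨t, ⟨ht_pos, ht⟩, rfl⟩
  exact Nat.cast_le.2 (not_lt.1 fun htn => hmin t ht_pos htn ht)

theorem hittingTime_eq_top (h : ∀ t, 1 ≤ t → S^[t] x ∉ A) : hittingTime S A x = ∞ := by
  simp +contextual [hittingTime, h]

theorem hittingTime_eq_tsum_indicator (hx : x ∉ A) :
    hittingTime S A x = ∑' t, (avoidUntil S A t).indicator 1 x := by
  classical
  by_cases h : ∃ n, S^[n] x ∈ A
  · have hpos : 1 ≤ Nat.find h := (Nat.find_pos h).2 hx
    have hmem (t : ℕ) : x ∈ avoidUntil S A t ↔ t < Nat.find h :=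
      mem_avoidUntil_iff_lt (Nat.find_spec h) fun _ => Nat.find_min h
    calc hittingTime S A x
        = ∑ t ∈ Finset.range (Nat.find h), 1 := by
          simpa using hittingTime_eq_natCast hpos (Nat.find_spec h) fun _ _ => Nat.find_min h
      _ = ∑ t ∈ Finset.range (Nat.find h), (avoidUntil S A t).indicator 1 x :=
          Finset.sum_congr rfl fun t ht =>
            (Set.indicator_of_mem ((hmem t).2 (Finset.mem_range.1 ht)) 1).symm
      _ = ∑' t, (avoidUntil S A t).indicator 1 x :=
          (tsum_eq_sum fun t ht =>
            Set.indicator_of_notMem (fun hxt => ht (Finset.mem_range.2 ((hmem t).1 hxt))) 1).symm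
  · push Not at h
    have hmem (t : ℕ) : x ∈ avoidUntil S A t := fun s _ => h s
    simp [hittingTime_eq_top fun t _ => h t, hmem]

theorem preimage_iterate_avoidUntil (hST : Function.LeftInverse S T) (t : ℕ) :
    T^[t] ⁻¹' avoidUntil S A t = avoidUntil T A t := by
  have hcancel {s : ℕ} (hs : s ≤ t) (y : X) : S^[s] (T^[t] y) = T^[t - s] y := by
    rw [← Nat.add_sub_of_le hs, Function.iterate_add_apply, hST.iterate s, Nat.add_sub_cancel_left]
  ext y
  constructor
  · intro hy s hs
    simpa only [hcancel (t.sub_le s), Nat.sub_sub_self hs] using hy (t - s) (t.sub_le s)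
  · intro hy s hs
    simpa only [hcancel hs] using hy (t - s) (t.sub_le s)

theorem disjointed_preimage_iterate_succ (t : ℕ) :
    disjointed (fun n => T^[n] ⁻¹' A) (t + 1) = avoidUntil T A t ∩ T^[t + 1] ⁻¹' A := by
  ext y
  simp [-Function.iterate_succ, disjointed_add_one, partialSups_eq_biUnion_range, avoidUntil,
    and_comm]

theorem iUnion_disjointed_succ (f : ℕ → Set X) : ⋃ t, disjointed f (t + 1) = (⋃ n, f n) \ f 0 := by
  have hdisj : Disjoint (disjointed f 0) (⋃ t, disjointed f (t + 1)) :=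
    Set.disjoint_iUnion_right.2 fun t => disjoint_disjointed f t.succ_ne_zero.symm
  rw [← iUnion_disjointed (f := f), ← Set.union_iUnion_nat_succ (disjointed f),
    ← disjointed_zero f, Set.union_sdiff_cancel_left hdisj.le_bot]

variable [MeasurableSpace X] {μ : Measure X}

theorem measurableSet_avoidUntil (hS : Measurable S) (hA : MeasurableSet A) (t : ℕ) :
    MeasurableSet (avoidUntil S A t) := by
  simp only [avoidUntil, Set.ofPred_forall]
  exact .iInter fun s => .iInter fun _ => (hS.iterate s hA).compl

theorem setLIntegral_hittingTime (hS : Measurable S) (hA : MeasurableSet A)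
    (hB : MeasurableSet B) (hBA : B ⊆ Aᶜ) :
    ∫⁻ x in B, hittingTime S A x ∂μ = ∑' t, μ (avoidUntil S A t ∩ B) := by
  have hmeas := measurableSet_avoidUntil hS hA
  rw [setLIntegral_congr_fun hB fun x hx => hittingTime_eq_tsum_indicator (hBA hx),
    lintegral_tsum fun t => (measurable_one.indicator (hmeas t)).aemeasurable]
  simp only [lintegral_indicator_one, hmeas, Measure.restrict_apply]

theorem measure_avoidUntil_inter_preimage (hT : MeasurePreserving T μ μ) (hS : Measurable S)
    (hST : Function.LeftInverse S T) (hA : MeasurableSet A) (t : ℕ) :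
    μ (avoidUntil S A t ∩ T ⁻¹' A) = μ (disjointed (fun n => T^[n] ⁻¹' A) (t + 1)) := by
  have hmeas : MeasurableSet (avoidUntil S A t ∩ T ⁻¹' A) :=
    (measurableSet_avoidUntil hS hA t).inter (hT.measurable hA)
  rw [← (hT.iterate t).measure_preimage hmeas.nullMeasurableSet, Set.preimage_inter,
    preimage_iterate_avoidUntil hST, disjointed_preimage_iterate_succ, Function.iterate_succ',
    Set.preimage_comp]

theorem stmt6_general (hT : MeasurePreserving T μ μ) (hS : Measurable S)
    (hST : Function.LeftInverse S T) (hA : MeasurableSet A) :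
    ∫⁻ x in T ⁻¹' A \ A, hittingTime S A x ∂μ = μ ((⋃ n, T^[n] ⁻¹' A) \ A) := by
  have hmeas (n : ℕ) : MeasurableSet (T^[n] ⁻¹' A) := hT.measurable.iterate n hA
  have hinter (t : ℕ) : avoidUntil S A t ∩ (T ⁻¹' A \ A) = avoidUntil S A t ∩ T ⁻¹' A := by
    rw [Set.sdiff_eq, Set.inter_left_comm, Set.inter_comm,
      Set.inter_eq_left.2 (avoidUntil_subset_compl t)]
  calc ∫⁻ x in T ⁻¹' A \ A, hittingTime S A x ∂μ
      = ∑' t, μ (avoidUntil S A t ∩ (T ⁻¹' A \ A)) :=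
        setLIntegral_hittingTime hS hA ((hT.measurable hA).diff hA) fun _ hx => hx.2
    _ = ∑' t, μ (disjointed (fun n => T^[n] ⁻¹' A) (t + 1)) := by
        simp only [hinter, measure_avoidUntil_inter_preimage hT hS hST hA]
    _ = μ (⋃ t, disjointed (fun n => T^[n] ⁻¹' A) (t + 1)) :=
        (measure_iUnion ((disjoint_disjointed _).comp_of_injective (add_left_injective 1))
          fun t => .disjointed hmeas (t + 1)).symm
    _ = μ ((⋃ n, T^[n] ⁻¹' A) \ A) := by
        rw [iUnion_disjointed_succ, Function.iterate_zero, Set.preimage_id]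

end HittingTime

/-- Recurrence-time estimate: let `(X, μ)` be a probability space and
`T : X ≃ᵐ X` a measure-preserving measurable bijection. For a measurable set `A`, define the
backward hitting time `τ x := inf { t ∈ ℕ : 1 ≤ t ∧ T⁻ᵗ x ∈ A }` (with value `∞` if no such
`t` exists). Then `∫_{T⁻¹(A) \ A} τ dμ ≤ μ(X \ A)`. -/
theorem stmt6 {X : Type*} [MeasurableSpace X] (μ : Measure X) [IsProbabilityMeasure μ]
    (T : X ≃ᵐ X) (hT : MeasurePreserving (⇑T) μ μ)
    (A : Set X) (hA : MeasurableSet A)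
    (τ : X → ℝ≥0∞)
    (hτ : ∀ x, τ x = sInf ((fun t : ℕ => (t : ℝ≥0∞)) ''
      {t : ℕ | 1 ≤ t ∧ (⇑T.symm)^[t] x ∈ A})) :
    ∫⁻ x in (⇑T ⁻¹' A) \ A, τ x ∂μ ≤ μ (Set.univ \ A) := by
  obtain rfl : τ = hittingTime T.symm A := funext hτ
  exact (stmt6_general hT T.symm.measurable T.symm_apply_apply hA).trans_le
    (measure_mono (Set.sdiff_subset_sdiff_left (Set.subset_univ _)))
end

section
/- Let (Ω, ν) be a probability space and T : Ω → Ω an invertible measure-preserving transformation (a measurable bijection with measurable inverse preserving ν). Let φ : Ω → ℝ be measurable and essentially bounded, and let A, B, β, κ ∈ ℝ with B ≤ A, β < A, and 0 ≤ κ ≤ 1, such that φ(x) ≥ B for ν-almost every x and ν({ x : φ(x) ≥ A }) ≥ κ. For j ∈ ℕ define the Birkhoff sums φ_j(x) := ∑_{i=0}^{j−1} φ(Tⁱ x). Then ν({ x : for all j ∈ ℕ, φ_j(x) ≥ β·j }) ≥ (κ·A + (1−κ)·B − β) / (A − β). -/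
open MeasureTheory

/-!
Truncating `φ` at `A` only shrinks the set of Pliss points, so take `B ≤ φ ≤ A`. By the maximal
ergodic theorem, `∫ (φ - β) ≤ 0` over the set where some Birkhoff sum of `φ - β` is negative.
Hence `∫ (φ - β)` is at most its integral over the complementary set `P` of Pliss points, which is
at most `(A - β) ν(P)`. Markov's inequality applied to `φ - B` gives
`κ A + (1 - κ) B - β ≤ ∫ (φ - β)`.
-/

section Birkhoff

variable {α : Type*} {f : α → α} {g : α → ℝ} {n : ℕ} {x : α}

/-- The running maximum `max_{0 ≤ k ≤ n} birkhoffSum f g k` of the Birkhoff sums, the auxiliary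
function in the proof of the maximal ergodic theorem. The empty sum `k = 0` is included, so it is
nonnegative. -/
noncomputable def birkhoffMax (f : α → α) (g : α → ℝ) : ℕ →o (α → ℝ) :=
  partialSups (birkhoffSum f g)

lemma birkhoffSum_le_birkhoffMax {k : ℕ} (hk : k ≤ n) :
    birkhoffSum f g k x ≤ birkhoffMax f g n x :=
  le_partialSups_of_le (birkhoffSum f g) hk x

lemma birkhoffMax_nonneg : 0 ≤ birkhoffMax f g n x :=
  (birkhoffSum_zero f g x).symm.trans_le (birkhoffSum_le_birkhoffMax n.zero_le)

lemma exists_birkhoffMax_eq (f : α → α) (g : α → ℝ) (n : ℕ) (x : α) :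
    ∃ k ≤ n, birkhoffMax f g n x = birkhoffSum f g k x := by
  simpa only [birkhoffMax, Pi.partialSups_apply] using
    exists_partialSups_eq (fun k => birkhoffSum f g k x) n

lemma birkhoffMax_pos_iff : 0 < birkhoffMax f g n x ↔ ∃ k ≤ n, 0 < birkhoffSum f g k x := by
  refine ⟨fun h => ?_, fun ⟨k, hk, h⟩ => h.trans_le (birkhoffSum_le_birkhoffMax hk)⟩
  obtain ⟨k, hk, max_eq⟩ := exists_birkhoffMax_eq f g n x
  exact ⟨k, hk, max_eq ▸ h⟩

lemma iUnion_birkhoffMax_pos :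
    ⋃ n, {x | 0 < birkhoffMax f g n x} = {x | ∃ n, 0 < birkhoffSum f g n x} := by
  ext x
  simp only [Set.mem_iUnion, Set.mem_ofPred_eq, birkhoffMax_pos_iff]
  exact ⟨fun ⟨_, k, _, hk⟩ => ⟨k, hk⟩, fun ⟨n, hn⟩ => ⟨n, n, le_rfl, hn⟩⟩

lemma birkhoffMax_le_add_of_pos (h : 0 < birkhoffMax f g n x) :
    birkhoffMax f g n x ≤ g x + birkhoffMax f g n (f x) := by
  obtain ⟨k, hk, max_eq⟩ := exists_birkhoffMax_eq f g n x
  cases k with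
  | zero => simp [max_eq] at h
  | succ k =>
    rw [max_eq, birkhoffSum_succ']
    gcongr
    exact birkhoffSum_le_birkhoffMax (Nat.le_of_succ_le hk)

lemma birkhoffSum_min_sub_le {A β : ℝ} :
    birkhoffSum f (fun y => min (g y) A - β) n x ≤ birkhoffSum f g n x - β * n := by
  calc birkhoffSum f (fun y => min (g y) A - β) n x
      ≤ ∑ i ∈ Finset.range n, (g (f^[i] x) - β) :=
        Finset.sum_le_sum fun i _ => sub_le_sub_right (min_le_left _ _) β
    _ = birkhoffSum f g n x - β * n := by simp [birkhoffSum, mul_comm]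

end Birkhoff

section MaximalErgodic

variable {α : Type*} [MeasurableSpace α] {μ : Measure α} {f : α → α} {g : α → ℝ}

lemma integrable_birkhoffSum (hf : MeasurePreserving f μ μ) (hg : Integrable g μ) (n : ℕ) :
    Integrable (birkhoffSum f g n) μ :=
  integrable_finsetSum _ fun k _ => (hf.iterate k).integrable_comp_of_integrable hg

lemma integrable_birkhoffMax (hf : MeasurePreserving f μ μ) (hg : Integrable g μ) (n : ℕ) :
    Integrable (birkhoffMax f g n) μ := by
  induction n with
  | zero => simpa only [birkhoffMax, partialSups_zero] using integrable_birkhoffSum hf hg 0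
  | succ n ih =>
    simpa only [birkhoffMax, partialSups_add_one] using
      ih.sup (integrable_birkhoffSum hf hg (n + 1))

lemma nullMeasurableSet_birkhoffMax_pos (hf : MeasurePreserving f μ μ) (hg : Integrable g μ)
    (n : ℕ) : NullMeasurableSet {x | 0 < birkhoffMax f g n x} μ :=
  nullMeasurableSet_lt aemeasurable_const (integrable_birkhoffMax hf hg n).aemeasurable

lemma setIntegral_birkhoffMax_pos_nonneg (hf : MeasurePreserving f μ μ) (hg : Integrable g μ)
    (n : ℕ) : 0 ≤ ∫ x in {x | 0 < birkhoffMax f g n x}, g x ∂μ := by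
  set M := birkhoffMax f g n
  set E := {x | 0 < M x}
  have hM : Integrable M μ := integrable_birkhoffMax hf hg n
  have hMf : Integrable (fun x => M (f x)) μ := hf.integrable_comp_of_integrable hM
  have integral_comp : ∫ x, M (f x) ∂μ = ∫ x, M x ∂μ := by
    conv_rhs => rw [← hf.map_eq]
    exact (integral_map hf.aemeasurable (hf.map_eq.symm ▸ hM.aestronglyMeasurable)).symm
  have step : ∫ x, M x ∂μ ≤ (∫ x in E, g x ∂μ) + ∫ x, M x ∂μ :=
    calc ∫ x, M x ∂μ
        = ∫ x in E, M x ∂μ :=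
          (setIntegral_eq_integral_of_forall_compl_eq_zero fun x hx =>
            le_antisymm (not_lt.1 hx) birkhoffMax_nonneg).symm
      _ ≤ ∫ x in E, (g x + M (f x)) ∂μ :=
          setIntegral_mono_on₀ hM.integrableOn (hg.add hMf).integrableOn
            (nullMeasurableSet_birkhoffMax_pos hf hg n) fun x hx => birkhoffMax_le_add_of_pos hx
      _ = (∫ x in E, g x ∂μ) + ∫ x in E, M (f x) ∂μ :=
          integral_add hg.integrableOn hMf.integrableOn
      _ ≤ (∫ x in E, g x ∂μ) + ∫ x, M (f x) ∂μ :=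
          add_le_add le_rfl <|
            setIntegral_le_integral hMf (.of_forall fun x => birkhoffMax_nonneg)
      _ = (∫ x in E, g x ∂μ) + ∫ x, M x ∂μ := by rw [integral_comp]
  linarith

theorem setIntegral_exists_birkhoffSum_pos_nonneg (hf : MeasurePreserving f μ μ)
    (hg : Integrable g μ) : 0 ≤ ∫ x in {x | ∃ n, 0 < birkhoffSum f g n x}, g x ∂μ := by
  have mono : Monotone fun n => {x | 0 < birkhoffMax f g n x} :=
    fun _ _ hmn x hx => lt_of_lt_of_le hx ((birkhoffMax f g).monotone hmn x)
  rw [← iUnion_birkhoffMax_pos]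
  exact ge_of_tendsto'
    (tendsto_setIntegral_of_monotone₀ (nullMeasurableSet_birkhoffMax_pos hf hg) mono
      hg.integrableOn)
    (setIntegral_birkhoffMax_pos_nonneg hf hg)

theorem setIntegral_exists_birkhoffSum_neg_nonpos (hf : MeasurePreserving f μ μ)
    (hg : Integrable g μ) : ∫ x in {x | ∃ n, birkhoffSum f g n x < 0}, g x ∂μ ≤ 0 := by
  simpa only [birkhoffSum_neg, Pi.neg_apply, integral_neg, neg_pos, neg_nonneg] using
    setIntegral_exists_birkhoffSum_pos_nonneg hf hg.neg

lemma nullMeasurableSet_forall_birkhoffSum_nonneg (hf : MeasurePreserving f μ μ)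
    (hg : Integrable g μ) : NullMeasurableSet {x | ∀ n, 0 ≤ birkhoffSum f g n x} μ := by
  rw [Set.ofPred_forall]
  exact .iInter fun n =>
    nullMeasurableSet_le aemeasurable_const (integrable_birkhoffSum hf hg n).aemeasurable

theorem integral_le_measureReal_forall_birkhoffSum_nonneg_mul [IsFiniteMeasure μ] {D : ℝ}
    (hf : MeasurePreserving f μ μ) (hg : Integrable g μ) (hD : ∀ᵐ x ∂μ, g x ≤ D) :
    ∫ x, g x ∂μ ≤ μ.real {x | ∀ n, 0 ≤ birkhoffSum f g n x} * D := by
  set P := {x | ∀ n, 0 ≤ birkhoffSum f g n x}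
  have compl_P : Pᶜ = {x | ∃ n, birkhoffSum f g n x < 0} := by ext x; simp [P]
  calc ∫ x, g x ∂μ
      = (∫ x in P, g x ∂μ) + ∫ x in Pᶜ, g x ∂μ :=
        (integral_add_compl₀ (nullMeasurableSet_forall_birkhoffSum_nonneg hf hg) hg).symm
    _ ≤ ∫ x in P, g x ∂μ := by
        rw [compl_P]
        exact add_le_of_nonpos_right (setIntegral_exists_birkhoffSum_neg_nonpos hf hg)
    _ ≤ ∫ _ in P, D ∂μ := setIntegral_mono_ae hg.integrableOn (integrable_const D).integrableOn hD
    _ = μ.real P * D := by rw [setIntegral_const, smul_eq_mul]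

end MaximalErgodic

section Pliss

variable {Ω : Type*} [MeasurableSpace Ω] {ν : Measure Ω}

lemma mul_add_mul_le_integral_of_le_measureReal [IsFiniteMeasure ν] {φ : Ω → ℝ} {A B κ : ℝ}
    (hBA : B ≤ A) (hφ : Integrable φ ν) (hB : ∀ᵐ x ∂ν, B ≤ φ x)
    (hκ : κ ≤ ν.real {x | A ≤ φ x}) :
    κ * A + (ν.real Set.univ - κ) * B ≤ ∫ x, φ x ∂ν := by
  have markov : (A - B) * ν.real {x | A - B ≤ φ x - B} ≤ ∫ x, (φ x - B) ∂ν :=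
    mul_meas_ge_le_integral_of_nonneg (hB.mono fun x hx => sub_nonneg.2 hx)
      (hφ.sub (integrable_const B)) (A - B)
  simp only [sub_le_sub_iff_right, integral_sub hφ (integrable_const B), integral_const,
    smul_eq_mul] at markov
  linarith [mul_le_mul_of_nonneg_left hκ (sub_nonneg.2 hBA)]

theorem stmt7_general [IsProbabilityMeasure ν] {T : Ω → Ω} (hT : MeasurePreserving T ν ν)
    {φ : Ω → ℝ} (hφ : AEMeasurable φ ν) {A B β κ : ℝ} (hBA : B ≤ A) (hβA : β < A)
    (hB : ∀ᵐ x ∂ν, B ≤ φ x) (hA : ENNReal.ofReal κ ≤ ν {x | A ≤ φ x}) :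
    ENNReal.ofReal ((κ * A + (1 - κ) * B - β) / (A - β))
      ≤ ν {x | ∀ j : ℕ, β * j ≤ birkhoffSum T φ j x} := by
  set φA : Ω → ℝ := fun x => min (φ x) A
  set P := {x | ∀ j, 0 ≤ birkhoffSum T (fun y => φA y - β) j x}
  have B_le_φA : ∀ᵐ x ∂ν, B ≤ φA x := hB.mono fun x hx => le_min hx hBA
  have φA_integrable : Integrable φA ν := .of_mem_Icc B A (hφ.min aemeasurable_const)
    (B_le_φA.mono fun x hx => ⟨hx, min_le_right _ _⟩)
  have κ_le : κ ≤ ν.real {x | A ≤ φA x} := by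
    simpa only [φA, le_min_iff, le_refl, and_true, measureReal_def] using
      (ENNReal.ofReal_le_iff_le_toReal (measure_ne_top _ _)).1 hA
  have lower : κ * A + (1 - κ) * B ≤ ∫ x, φA x ∂ν := by
    simpa only [probReal_univ] using
      mul_add_mul_le_integral_of_le_measureReal hBA φA_integrable B_le_φA κ_le
  have upper : ∫ x, (φA x - β) ∂ν ≤ ν.real P * (A - β) :=
    integral_le_measureReal_forall_birkhoffSum_nonneg_mul hT
      (φA_integrable.sub (integrable_const β))
      (.of_forall fun x => sub_le_sub_right (min_le_right (φ x) A) β)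
  have P_subset : P ⊆ {x | ∀ j : ℕ, β * j ≤ birkhoffSum T φ j x} :=
    fun x hx j => sub_nonneg.1 ((hx j).trans birkhoffSum_min_sub_le)
  refine le_trans ?_ (measure_mono P_subset)
  rw [ENNReal.ofReal_le_iff_le_toReal (measure_ne_top _ _), div_le_iff₀ (sub_pos.2 hβA)]
  calc κ * A + (1 - κ) * B - β
      ≤ (∫ x, φA x ∂ν) - β := sub_le_sub_right lower β
    _ = ∫ x, (φA x - β) ∂ν := by simp [integral_sub φA_integrable (integrable_const β)]
    _ ≤ ν.real P * (A - β) := upper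

end Pliss

/-- Pliss-point measure estimate: let `(Ω, ν)` be a probability space,
`T : Ω ≃ᵐ Ω` an invertible measure-preserving transformation, and `φ : Ω → ℝ` measurable and
essentially bounded. Let `A, B, β, κ ∈ ℝ` with `B ≤ A`, `β < A`, `0 ≤ κ ≤ 1`, such that
`φ ≥ B` ν-a.e. and `ν {φ ≥ A} ≥ κ`. Then, with Birkhoff sums `φ_j(x) = ∑_{i<j} φ(Tⁱ x)`,
`ν { x : ∀ j, φ_j(x) ≥ β j } ≥ (κ A + (1−κ) B − β) / (A − β)`. -/
theorem stmt7 {Ω : Type*} [MeasurableSpace Ω] (ν : Measure Ω) [IsProbabilityMeasure ν]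
    (T : Ω ≃ᵐ Ω) (hT : MeasurePreserving (⇑T) ν ν)
    (φ : Ω → ℝ) (hmeas : Measurable φ) (hbdd : ∃ Cb : ℝ, ∀ᵐ x ∂ν, |φ x| ≤ Cb)
    (A B β κ : ℝ) (hBA : B ≤ A) (hβA : β < A) (hκ0 : 0 ≤ κ) (hκ1 : κ ≤ 1)
    (hB : ∀ᵐ x ∂ν, B ≤ φ x)
    (hA : ENNReal.ofReal κ ≤ ν {x | A ≤ φ x}) :
    ENNReal.ofReal ((κ * A + (1 - κ) * B - β) / (A - β))
      ≤ ν {x | ∀ j : ℕ, β * j ≤ ∑ i ∈ Finset.range j, φ ((⇑T)^[i] x)} :=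
  stmt7_general hT hmeas.aemeasurable hBA hβA hB hA
end

section
/- Let (Ω, ν) be a probability space, T : Ω → Ω an invertible ergodic measure-preserving transformation (a measurable bijection with measurable inverse, preserving ν and ergodic), and Π : Ω → (0, ∞) a measurable function. Fix ε > 0 and define the ε-tempered envelope Π_ε : Ω → (0, ∞] by Π_ε(x) := sup_{n∈ℤ} exp(−|n|·ε)·Π(Tⁿ x). If the function x ↦ log(Π(T x) / Π(x)) is ν-integrable, then Π_ε(x) < ∞ for ν-almost every x. -/
open MeasureTheory
open scoped ENNReal

/-!
Put `f = log P`. For `h = f ∘ T - f - ε` the `n`-th Birkhoff sum is `f ∘ Tⁿ - f - nε`, so it has to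
be shown that the Birkhoff sums of `h` are bounded above almost everywhere, and likewise for `T⁻¹`.
Let `D` be the invariant set where they are not. Garsia's argument behind the maximal ergodic
theorem gives `0 ≤ ∫_D h`. On the other hand, the coboundary `f ∘ T - f` has integral zero over `D`
even if `f` is not integrable, by truncating `f`. Hence `0 ≤ -ε ν(D)`, so `D` is a null set.
-/

open Set Filter Topology

section BirkhoffSum

variable {α M : Type*} [AddCommGroup M] (T : α → α)

lemma birkhoffSum_comp_sub_self_sub_const (f : α → M) (c : M) (n : ℕ) (x : α) :
    birkhoffSum T (fun y => f (T y) - f y - c) n x = f (T^[n] x) - f x - n • c := by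
  induction n with
  | zero => simp
  | succ n ih =>
    rw [birkhoffSum_succ, ih, Function.iterate_succ_apply', succ_nsmul]
    abel

lemma bddAbove_range_birkhoffSum_apply_iff [Preorder M] [IsDirectedOrder M] [AddLeftMono M]
    (h : α → M) (x : α) :
    BddAbove (range fun n => birkhoffSum T h n (T x)) ↔
      BddAbove (range fun n => birkhoffSum T h n x) := by
  have range_succ : range ((fun n => birkhoffSum T h n x) ∘ Nat.succ) =
      OrderIso.addLeft (h x) '' range fun n => birkhoffSum T h n (T x) := by
    rw [← range_comp]
    exact congrArg range (funext fun n => birkhoffSum_succ' T h n x)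
  rw [← Nat.range_of_succ fun n => birkhoffSum T h n x, range_succ, singleton_union,
    bddAbove_insert, OrderIso.bddAbove_image]

lemma partialSups_birkhoffSum_add_one [Lattice M] [AddLeftMono M] (h : α → M) (N : ℕ) (x : α) :
    partialSups (fun n => birkhoffSum T h n x) (N + 1) =
      0 ⊔ (h x + partialSups (fun n => birkhoffSum T h n (T x)) N) := by
  rw [partialSups_add_one', ← partialSups_const_add]
  congr 2
  exact congrArg partialSups (funext fun n => birkhoffSum_succ' T h n x)

end BirkhoffSum

section MeasurePreserving

variable {Ω : Type*} [MeasurableSpace Ω] {μ : Measure Ω} {T : Ω → Ω}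

lemma integral_comp_of_measurePreserving {Ω' E : Type*} [MeasurableSpace Ω'] {μ' : Measure Ω'}
    [NormedAddCommGroup E] [NormedSpace ℝ E] {φ : Ω → Ω'} (hφ : MeasurePreserving φ μ μ')
    {g : Ω' → E} (hg : AEStronglyMeasurable g μ') :
    ∫ x, g (φ x) ∂μ = ∫ y, g y ∂μ' := by
  rw [← hφ.map_eq] at hg ⊢
  exact (integral_map hφ.aemeasurable hg).symm

lemma integral_comp_sub_self_eq_zero_of_integrable {E : Type*} [NormedAddCommGroup E]
    [NormedSpace ℝ E] (hT : MeasurePreserving T μ μ) {f : Ω → E} (hf : Integrable f μ) :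
    ∫ x, (f (T x) - f x) ∂μ = 0 := by
  have hf_comp : Integrable (fun x => f (T x)) μ := hT.integrable_comp_of_integrable hf
  rw [integral_sub hf_comp hf, integral_comp_of_measurePreserving hT hf.aestronglyMeasurable,
    sub_self]

lemma integral_comp_sub_self_eq_zero [IsFiniteMeasure μ] (hT : MeasurePreserving T μ μ)
    {f : Ω → ℝ} (hf : AEStronglyMeasurable f μ) (hint : Integrable (fun x => f (T x) - f x) μ) :
    ∫ x, (f (T x) - f x) ∂μ = 0 := by
  let clamp (K : ℕ) (y : ℝ) : ℝ := projIcc (-K : ℝ) K (neg_le_self K.cast_nonneg) y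
  have clamp_continuous (K : ℕ) : Continuous (clamp K) :=
    continuous_subtype_val.comp continuous_projIcc
  have clamp_nonexpansive (K : ℕ) (y z : ℝ) : ‖clamp K y - clamp K z‖ ≤ ‖y - z‖ := by
    simpa [Subtype.dist_eq, Real.dist_eq] using
      (LipschitzWith.projIcc (neg_le_self K.cast_nonneg)).dist_le_mul y z
  have clamp_tendsto (y : ℝ) : Tendsto (fun K => clamp K y) atTop (𝓝 y) := by
    refine tendsto_const_nhds.congr' ?_
    filter_upwards [tendsto_natCast_atTop_atTop.eventually_ge_atTop |y|] with K hK
    exact (congrArg Subtype.val (projIcc_of_mem _ (abs_le.1 hK))).symm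
  have clamp_comp_integrable (K : ℕ) : Integrable (fun x => clamp K (f x)) μ :=
    .of_bound ((clamp_continuous K).comp_aestronglyMeasurable hf) K <|
      .of_forall fun x => abs_le.2 (projIcc (-K : ℝ) K _ (f x)).2
  have integral_tendsto : Tendsto (fun K => ∫ x, (clamp K (f (T x)) - clamp K (f x)) ∂μ) atTop
      (𝓝 (∫ x, (f (T x) - f x) ∂μ)) :=
    tendsto_integral_of_dominated_convergence _
      (fun K => ((hT.integrable_comp_of_integrable (clamp_comp_integrable K)).sub
        (clamp_comp_integrable K)).aestronglyMeasurable)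
      hint.norm
      (fun K => .of_forall fun x => clamp_nonexpansive K (f (T x)) (f x))
      (.of_forall fun x => (clamp_tendsto (f (T x))).sub (clamp_tendsto (f x)))
  simp only [integral_comp_sub_self_eq_zero_of_integrable hT (clamp_comp_integrable _)]
    at integral_tendsto
  exact tendsto_nhds_unique integral_tendsto tendsto_const_nhds

lemma integrable_partialSups_birkhoffSum (hT : MeasurePreserving T μ μ) {h : Ω → ℝ}
    (hh : Integrable h μ) (N : ℕ) :
    Integrable (fun x => partialSups (fun n => birkhoffSum T h n x) N) μ := by
  induction N with
  | zero => simp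
  | succ N ih =>
    simp only [partialSups_birkhoffSum_add_one]
    exact (integrable_zero _ _ _).sup (hh.add (hT.integrable_comp_of_integrable ih))

-- The integrand is `M (N + 1) x - M N (T x)`, where `M N` is the maximum of the Birkhoff sums of
-- length at most `N`, which increases with `N`.
lemma integral_max_neg_partialSups_birkhoffSum_nonneg (hT : MeasurePreserving T μ μ) {h : Ω → ℝ}
    (hh : Integrable h μ) (N : ℕ) :
    0 ≤ ∫ x, max (-partialSups (fun n => birkhoffSum T h n (T x)) N) (h x) ∂μ := by
  let M (N : ℕ) (x : Ω) : ℝ := partialSups (fun n => birkhoffSum T h n x) N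
  have M_integrable (N : ℕ) : Integrable (M N) μ := integrable_partialSups_birkhoffSum hT hh N
  have integrand_eq (x : Ω) : max (-M N (T x)) (h x) = M (N + 1) x - M N (T x) := by
    simp only [M, partialSups_birkhoffSum_add_one, ← max_sub_sub_right, zero_sub,
      add_sub_cancel_right]
  calc
    0 ≤ ∫ x, M (N + 1) x ∂μ - ∫ x, M N x ∂μ :=
      sub_nonneg.2 <| integral_mono (M_integrable N) (M_integrable (N + 1)) fun _ =>
        (partialSups _).monotone N.le_succ
    _ = ∫ x, M (N + 1) x ∂μ - ∫ x, M N (T x) ∂μ := by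
      rw [integral_comp_of_measurePreserving hT (M_integrable N).aestronglyMeasurable]
    _ = ∫ x, (M (N + 1) x - M N (T x)) ∂μ :=
      (integral_sub (M_integrable _) (hT.integrable_comp_of_integrable (M_integrable N))).symm
    _ = ∫ x, max (-M N (T x)) (h x) ∂μ := by simp only [integrand_eq]

lemma integral_nonneg_of_ae_not_bddAbove_birkhoffSum (hT : MeasurePreserving T μ μ) {h : Ω → ℝ}
    (hh : Integrable h μ)
    (hunbdd : ∀ᵐ x ∂μ, ¬BddAbove (range fun n => birkhoffSum T h n x)) :
    0 ≤ ∫ x, h x ∂μ := by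
  let M (N : ℕ) (x : Ω) : ℝ := partialSups (fun n => birkhoffSum T h n x) N
  have M_nonneg (N : ℕ) (x : Ω) : 0 ≤ M N x := by
    simpa using le_partialSups_of_le (fun n => birkhoffSum T h n x) N.zero_le
  have norm_max_le (N : ℕ) (x : Ω) : ‖max (-M N (T x)) (h x)‖ ≤ ‖h x‖ := by
    have neg_M_le : -M N (T x) ≤ |h x| := (neg_nonpos.2 (M_nonneg N (T x))).trans (abs_nonneg _)
    exact abs_le.2 ⟨(neg_abs_le _).trans (le_max_right _ _), max_le neg_M_le (le_abs_self _)⟩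
  have max_eventually_eq : ∀ᵐ x ∂μ, ∀ᶠ N in atTop, h x = max (-M N (T x)) (h x) := by
    filter_upwards [hunbdd] with x hx
    rw [← bddAbove_range_birkhoffSum_apply_iff, ← bddAbove_range_partialSups] at hx
    filter_upwards [(tendsto_atTop_atTop_of_monotone' (partialSups _).monotone
      hx).eventually_ge_atTop (-h x)] with N hN
    exact (max_eq_right (neg_le.1 hN)).symm
  have integral_tendsto : Tendsto (fun N => ∫ x, max (-M N (T x)) (h x) ∂μ) atTop
      (𝓝 (∫ x, h x ∂μ)) :=
    tendsto_integral_of_dominated_convergence _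
      (fun N => ((hT.integrable_comp_of_integrable
        (integrable_partialSups_birkhoffSum hT hh N)).neg.sup hh).aestronglyMeasurable)
      hh.norm
      (fun N => .of_forall (norm_max_le N))
      (max_eventually_eq.mono fun _ hx => tendsto_const_nhds.congr' hx)
  exact ge_of_tendsto' integral_tendsto (integral_max_neg_partialSups_birkhoffSum_nonneg hT hh)

lemma ae_bddAbove_range_birkhoffSum_comp_sub_self_sub_const [IsFiniteMeasure μ]
    (hT : MeasurePreserving T μ μ) {f : Ω → ℝ} (hf : Measurable f)
    (hint : Integrable (fun x => f (T x) - f x) μ) {ε : ℝ} (hε : 0 < ε) :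
    ∀ᵐ x ∂μ, BddAbove (range fun n => birkhoffSum T (fun y => f (T y) - f y - ε) n x) := by
  let h (x : Ω) : ℝ := f (T x) - f x - ε
  let D : Set Ω := {x | ¬BddAbove (range fun n => birkhoffSum T h n x)}
  have h_measurable : Measurable h := ((hf.comp hT.measurable).sub hf).sub_const ε
  have D_measurable : MeasurableSet D :=
    (measurableSet_bddAbove_range fun n => Finset.measurable_sum _ fun k _ =>
      h_measurable.comp (hT.measurable.iterate k)).compl
  have D_invariant : T ⁻¹' D = D :=
    ext fun x => not_congr (bddAbove_range_birkhoffSum_apply_iff T h x)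
  have T_preserves_D : MeasurePreserving T (μ.restrict D) (μ.restrict D) := by
    simpa only [D_invariant] using hT.restrict_preimage D_measurable
  have setIntegral_nonneg : 0 ≤ ∫ x in D, h x ∂μ :=
    integral_nonneg_of_ae_not_bddAbove_birkhoffSum T_preserves_D
      (hint.sub (integrable_const ε)).restrict (ae_restrict_mem D_measurable)
  have setIntegral_eq : ∫ x in D, h x ∂μ = -(μ.real D * ε) := by
    rw [integral_sub hint.restrict (integrable_const ε), integral_comp_sub_self_eq_zero
      T_preserves_D hf.aestronglyMeasurable hint.restrict, setIntegral_const, smul_eq_mul, zero_sub]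
  have measureReal_D : μ.real D = 0 := by
    refine le_antisymm (nonpos_of_mul_nonpos_left ?_ hε) measureReal_nonneg
    linarith
  exact (measureReal_eq_zero_iff).1 measureReal_D

lemma ae_bddAbove_range_iterate_sub_mul [IsFiniteMeasure μ] (hT : MeasurePreserving T μ μ)
    {f : Ω → ℝ} (hf : Measurable f) (hint : Integrable (fun x => f (T x) - f x) μ)
    {ε : ℝ} (hε : 0 < ε) :
    ∀ᵐ x ∂μ, BddAbove (range fun n : ℕ => f (T^[n] x) - n * ε) := by
  filter_upwards [ae_bddAbove_range_birkhoffSum_comp_sub_self_sub_const hT hf hint hε] with x hx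
  obtain ⟨C, hC⟩ := hx
  refine ⟨C + f x, forall_mem_range.2 fun n => ?_⟩
  have birkhoffSum_le := hC (mem_range_self n)
  simp only [birkhoffSum_comp_sub_self_sub_const, nsmul_eq_mul] at birkhoffSum_le
  linarith

lemma ae_bddAbove_range_zpow_sub_abs_mul [IsFiniteMeasure μ] {T : Ω ≃ᵐ Ω}
    (hT : MeasurePreserving T μ μ) {f : Ω → ℝ} (hf : Measurable f)
    (hint : Integrable (fun x => f (T x) - f x) μ) {ε : ℝ} (hε : 0 < ε) :
    ∀ᵐ x ∂μ, BddAbove (range fun n : ℤ => f ((T.toEquiv ^ n) x) - |(n : ℝ)| * ε) := by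
  have hT_symm : MeasurePreserving T.symm μ μ := hT.symm T
  have hint_symm : Integrable (fun x => f (T.symm x) - f x) μ := by
    refine (hT_symm.integrable_comp_of_integrable hint).neg.congr (.of_forall fun x => ?_)
    simp
  filter_upwards [ae_bddAbove_range_iterate_sub_mul hT hf hint hε,
    ae_bddAbove_range_iterate_sub_mul hT_symm hf hint_symm hε] with x hforward hbackward
  refine (hforward.union hbackward).mono (range_subset_iff.2 fun n => ?_)
  obtain ⟨m, rfl | rfl⟩ := n.eq_nat_or_neg
  · refine .inl ⟨m, ?_⟩
    simp [← Equiv.Perm.iterate_eq_pow]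
  · refine .inr ⟨m, ?_⟩
    simp [← inv_pow, ← Equiv.Perm.iterate_eq_pow, Equiv.Perm.inv_def]

end MeasurePreserving

theorem stmt8_general {Ω : Type*} [MeasurableSpace Ω] {ν : Measure Ω} [IsFiniteMeasure ν]
    {T : Ω ≃ᵐ Ω} (hT : MeasurePreserving T ν ν)
    {P : Ω → ℝ} (hPmeas : Measurable P) (hPpos : ∀ x, 0 < P x) {ε : ℝ} (hε : 0 < ε)
    (hint : Integrable (fun x => Real.log (P (T x) / P x)) ν) :
    ∀ᵐ x ∂ν,
      (⨆ n : ℤ, ENNReal.ofReal (Real.exp (-|(n : ℝ)| * ε) * P ((T.toEquiv ^ n) x))) < ⊤ := by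
  simp only [Real.log_div (hPpos _).ne' (hPpos _).ne'] at hint
  filter_upwards [ae_bddAbove_range_zpow_sub_abs_mul hT hPmeas.log hint hε] with x hx
  obtain ⟨C, hC⟩ := hx
  refine (iSup_le fun n => ENNReal.ofReal_le_ofReal ?_).trans_lt
    (ENNReal.ofReal_lt_top (r := Real.exp C))
  calc
    Real.exp (-|(n : ℝ)| * ε) * P ((T.toEquiv ^ n) x)
      = Real.exp (Real.log (P ((T.toEquiv ^ n) x)) - |(n : ℝ)| * ε) := by
        rw [sub_eq_neg_add, Real.exp_add, Real.exp_log (hPpos _), neg_mul]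
    _ ≤ Real.exp C := Real.exp_le_exp.2 (hC (mem_range_self n))

/-- Finiteness of the ε-tempered envelope: let `(Ω, ν)` be a probability
space, `T : Ω ≃ᵐ Ω` an invertible ergodic measure-preserving transformation, and
`P : Ω → (0, ∞)` measurable. Fix `ε > 0` and let
`P_ε(x) := sup_{n∈ℤ} exp(−|n| ε) · P(Tⁿ x)`. If `x ↦ log (P(T x) / P(x))` is ν-integrable,
then `P_ε(x) < ∞` for ν-a.e. `x`. -/
theorem stmt8 {Ω : Type*} [MeasurableSpace Ω] (ν : Measure Ω) [IsProbabilityMeasure ν]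
    (T : Ω ≃ᵐ Ω) (hT : Ergodic (⇑T) ν)
    (P : Ω → ℝ) (hPmeas : Measurable P) (hPpos : ∀ x, 0 < P x)
    (ε : ℝ) (hε : 0 < ε)
    (hint : Integrable (fun x => Real.log (P (T x) / P x)) ν) :
    ∀ᵐ x ∂ν,
      (⨆ n : ℤ, ENNReal.ofReal (Real.exp (-|(n : ℝ)| * ε) * P ((T.toEquiv ^ n) x))) < ⊤ :=
  stmt8_general hT.toMeasurePreserving hPmeas hPpos hε hint
end

section
/- Let (Ω, ν) be a probability space, T : Ω → Ω an invertible ergodic measure-preserving transformation (a measurable bijection with measurable inverse, preserving ν and ergodic), and Π : Ω → (0, ∞) a measurable function. Fix ε > 0 and define the ε-tempered envelope Π_ε : Ω → (0, ∞] by Π_ε(x) := sup_{n∈ℤ} exp(−|n|·ε)·Π(Tⁿ x). Suppose there is a constant c₀ > 0 such that exp(−c₀) ≤ Π(T x) / Π(x) ≤ exp(c₀) for every x ∈ Ω. Then for every t > 0, ν({ x : Π_ε(x) > t }) ≤ 4 · max(c₀/ε, 1) · ν({ x : Π(x) > t }). -/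
open MeasureTheory
open scoped ENNReal

/-!
Put `q = log⁺ (P / t)`, so that `{P > t} = {q > 0} =: A` and the envelope exceeds `t` at `x` exactly
when `q (Tⁿ x) > |n| ε` for some `n`. Along an orbit `q` grows by at most `c₀` per step and is
positive only in `A`, so `q (Tⁿ x) > n ε` with `x ∉ A`, `n > 0` forces the Birkhoff sum of `c₀ 1_A`
over `T x, …, Tⁿ x` to exceed `n ε`. By the weak-type maximal ergodic inequality the set of such
points `T x` has measure at most `(c₀ / ε) ν(A)`. The same applies to `T⁻¹`, which gives the total
`2 (1 + c₀ / ε) ν(A)`.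

All functions take values in `ℝ≥0∞`, where truncated subtraction serves as the positive part; the
case of infinite `∫⁻ u` in the maximal inequality is then trivial.
-/

section MaximalErgodic

variable {Ω : Type*} {S : Ω → Ω} {u : Ω → ℝ≥0∞} {a : ℝ≥0∞} {n : ℕ} {x : Ω}

/-- The maximum over `k ≤ n` of the amount `(∑_{j < k} u (Sʲ x) - k a)⁺` by which the Birkhoff sums
of `u` exceed linear growth at rate `a`; the positive part is the truncated subtraction of `ℝ≥0∞`.
It plays the role of Garsia's maximal function in the maximal ergodic inequality. -/
noncomputable def birkhoffExcess (S : Ω → Ω) (u : Ω → ℝ≥0∞) (a : ℝ≥0∞) (n : ℕ) (x : Ω) : ℝ≥0∞ :=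
  partialSups (fun k : ℕ => birkhoffSum S u k x - k * a) n

lemma birkhoffExcess_pos_iff :
    0 < birkhoffExcess S u a n x ↔ ∃ k ≤ n, k * a < birkhoffSum S u k x := by
  simp only [birkhoffExcess, partialSups_eq_biSup, lt_iSup_iff, tsub_pos_iff_lt, exists_prop]

lemma birkhoffExcess_mono (x : Ω) : Monotone fun n => birkhoffExcess S u a n x :=
  partialSups_monotone _

lemma birkhoffExcess_le_birkhoffSum : birkhoffExcess S u a n x ≤ birkhoffSum S u n x :=
  partialSups_le _ _ _ fun _ hk => tsub_le_self.trans <|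
    Finset.sum_le_sum_of_subset (Finset.range_subset_range.2 hk)

lemma birkhoffExcess_add_le (hx : 0 < birkhoffExcess S u a n x) :
    birkhoffExcess S u a n x + a ≤ u x + birkhoffExcess S u a n (S x) := by
  obtain ⟨k, hkn, hk⟩ := exists_partialSups_eq (fun k : ℕ => birkhoffSum S u k x - k * a) n
  change birkhoffExcess S u a n x = _ at hk
  rw [hk] at hx ⊢
  obtain _ | k := k
  · simp at hx
  rw [Nat.cast_succ, add_one_mul] at hx ⊢
  have ha : a ≤ birkhoffSum S u (k + 1) x - k * a :=
    (lt_tsub_iff_left.2 (tsub_pos_iff_lt.1 hx)).le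
  calc birkhoffSum S u (k + 1) x - (k * a + a) + a
      = birkhoffSum S u (k + 1) x - k * a := by
        rw [← tsub_tsub, tsub_add_cancel_of_le ha]
    _ ≤ u x + (birkhoffSum S u k (S x) - k * a) := by
        rw [birkhoffSum_succ']
        exact add_tsub_le_assoc
    _ ≤ u x + birkhoffExcess S u a n (S x) := by
        gcongr
        exact le_partialSups_of_le (fun k : ℕ => birkhoffSum S u k (S x) - k * a)
          (Nat.le_of_succ_le hkn)

variable [MeasurableSpace Ω] {μ : Measure Ω}

lemma measurable_birkhoffSum {M : Type*} [AddCommMonoid M] [MeasurableSpace M] [MeasurableAdd₂ M]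
    {g : Ω → M} (hS : Measurable S) (hg : Measurable g) (n : ℕ) :
    Measurable (birkhoffSum S g n) :=
  Finset.measurable_fun_sum _ fun k _ => hg.comp (hS.iterate k)

lemma measurable_birkhoffExcess (hS : Measurable S) (hu : Measurable u) (a : ℝ≥0∞) (n : ℕ) :
    Measurable (birkhoffExcess S u a n) := by
  unfold birkhoffExcess
  simp only [partialSups_eq_biSup]
  exact .iSup fun k => .iSup fun _ => (measurable_birkhoffSum hS hu k).sub_const _

lemma lintegral_birkhoffSum (hS : MeasurePreserving S μ μ) (hu : Measurable u) (n : ℕ) :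
    ∫⁻ x, birkhoffSum S u n x ∂μ = n * ∫⁻ x, u x ∂μ := by
  simp only [birkhoffSum]
  rw [lintegral_finsetSum _ fun k _ => by exact hu.comp (hS.iterate k).measurable]
  simp only [(hS.iterate _).lintegral_comp hu, Finset.sum_const, Finset.card_range, nsmul_eq_mul]

lemma mul_measure_birkhoffExcess_pos_le (hS : MeasurePreserving S μ μ) (hu : Measurable u)
    (a : ℝ≥0∞) (n : ℕ) : a * μ {x | 0 < birkhoffExcess S u a n x} ≤ ∫⁻ x, u x ∂μ := by
  obtain hu_top | hu_top := eq_or_ne (∫⁻ x, u x ∂μ) ∞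
  · exact hu_top ▸ le_top
  have hG := measurable_birkhoffExcess hS.measurable hu a n
  set G := birkhoffExcess S u a n
  have hG_top : ∫⁻ x, G x ∂μ ≠ ∞ := by
    refine ne_top_of_le_ne_top ?_ (lintegral_mono fun _ => birkhoffExcess_le_birkhoffSum)
    rw [lintegral_birkhoffSum hS hu]
    exact ENNReal.mul_ne_top (ENNReal.natCast_ne_top n) hu_top
  have hE : MeasurableSet {x | 0 < G x} := measurableSet_lt measurable_const hG
  have hG_step (x : Ω) : G x + {x | 0 < G x}.indicator (fun _ => a) x ≤ u x + G (S x) := by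
    by_cases hx : 0 < G x
    · rw [Set.indicator_of_mem (by exact hx)]
      exact birkhoffExcess_add_le hx
    · rw [Set.indicator_of_notMem (by exact hx), nonpos_iff_eq_zero.1 (not_lt.1 hx), zero_add]
      exact zero_le
  refine (ENNReal.add_le_add_iff_left hG_top).1 ?_
  calc ∫⁻ x, G x ∂μ + a * μ {x | 0 < G x}
      = ∫⁻ x, G x + {x | 0 < G x}.indicator (fun _ => a) x ∂μ := by
        rw [lintegral_add_left hG, lintegral_indicator_const hE]
    _ ≤ ∫⁻ x, u x + G (S x) ∂μ := lintegral_mono hG_step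
    _ = ∫⁻ x, G x ∂μ + ∫⁻ x, u x ∂μ := by
        rw [lintegral_add_left hu, hS.lintegral_comp hG, add_comm]

theorem mul_measure_exists_lt_birkhoffSum_le (hS : MeasurePreserving S μ μ) (hu : Measurable u)
    (a : ℝ≥0∞) : a * μ {x | ∃ n : ℕ, n * a < birkhoffSum S u n x} ≤ ∫⁻ x, u x ∂μ := by
  have h_union : {x | ∃ n : ℕ, n * a < birkhoffSum S u n x}
      = ⋃ n, {x | 0 < birkhoffExcess S u a n x} := by
    ext x
    simp only [Set.mem_iUnion, Set.mem_ofPred_eq, birkhoffExcess_pos_iff]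
    exact ⟨fun ⟨n, hn⟩ => ⟨n, n, le_rfl, hn⟩, fun ⟨_, k, _, hk⟩ => ⟨k, hk⟩⟩
  have h_mono : Monotone fun n => {x | 0 < birkhoffExcess S u a n x} :=
    fun _ _ hmn x hx => lt_of_lt_of_le hx (birkhoffExcess_mono x hmn)
  rw [h_union, h_mono.measure_iUnion, ENNReal.mul_iSup]
  exact iSup_le (mul_measure_birkhoffExcess_pos_le hS hu a)

end MaximalErgodic

section BoundedIncrements

variable {Ω : Type*} {q : Ω → ℝ≥0∞} {c : ℝ≥0∞}

lemma apply_iterate_le_add_birkhoffSum_indicator {S : Ω → Ω} (hq : ∀ x, q (S x) ≤ q x + c)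
    (n : ℕ) (x : Ω) :
    q (S^[n] x) ≤ q x + birkhoffSum S ({y | 0 < q y}.indicator fun _ => c) n (S x) := by
  induction n with
  | zero => simp
  | succ n ih =>
    rw [birkhoffSum_succ, ← Function.iterate_succ_apply, ← add_assoc]
    obtain h_zero | h_pos := eq_zero_or_pos (q (S^[n + 1] x))
    · exact h_zero.trans_le zero_le
    · rw [Set.indicator_of_mem (by exact h_pos), Function.iterate_succ_apply']
      exact (hq _).trans (by gcongr)

variable [MeasurableSpace Ω] {μ : Measure Ω}

theorem mul_measure_exists_nat_mul_lt_apply_iterate_le {S : Ω → Ω} (hS : MeasurePreserving S μ μ)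
    (hqm : Measurable q) (hq : ∀ x, q (S x) ≤ q x + c) (a : ℝ≥0∞) :
    a * μ {x | ∃ n : ℕ, n * a < q (S^[n] x)} ≤ (a + c) * μ {x | 0 < q x} := by
  set A : Set Ω := {x | 0 < q x}
  have hA : MeasurableSet A := measurableSet_lt measurable_const hqm
  set u : Ω → ℝ≥0∞ := A.indicator fun _ => c
  have hu : Measurable u := measurable_const.indicator hA
  set B : Set Ω := {y | ∃ n : ℕ, n * a < birkhoffSum S u n y}
  have hB : MeasurableSet B := by
    simp only [B, Set.ofPred_exists]
    exact .iUnion fun n =>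
      measurableSet_lt measurable_const (measurable_birkhoffSum hS.measurable hu n)
  have h_subset : {x | ∃ n : ℕ, n * a < q (S^[n] x)} ⊆ A ∪ S ⁻¹' B := by
    rintro x ⟨n, hn⟩
    obtain h_zero | h_pos := eq_zero_or_pos (q x)
    · have h_orbit := apply_iterate_le_add_birkhoffSum_indicator hq n x
      rw [h_zero, zero_add] at h_orbit
      exact .inr ⟨n, hn.trans_le h_orbit⟩
    · exact .inl h_pos
  calc a * μ {x | ∃ n : ℕ, n * a < q (S^[n] x)}
      ≤ a * (μ A + μ (S ⁻¹' B)) := by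
        gcongr
        exact (measure_mono h_subset).trans (measure_union_le _ _)
    _ = a * μ A + a * μ B := by rw [hS.measure_preimage hB.nullMeasurableSet, mul_add]
    _ ≤ a * μ A + ∫⁻ x, u x ∂μ := by
        gcongr
        exact mul_measure_exists_lt_birkhoffSum_le hS hu a
    _ = (a + c) * μ A := by rw [lintegral_indicator_const hA, add_mul]

theorem mul_measure_exists_int_mul_lt_apply_zpow_le {T : Ω ≃ᵐ Ω} (hT : MeasurePreserving T μ μ)
    (hqm : Measurable q) (hq : ∀ x, q (T x) ≤ q x + c) (hq_symm : ∀ x, q x ≤ q (T x) + c)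
    (a : ℝ≥0∞) :
    a * μ {x | ∃ n : ℤ, n.natAbs * a < q ((T.toEquiv ^ n) x)}
      ≤ 2 * (a + c) * μ {x | 0 < q x} := by
  have h_subset : {x | ∃ n : ℤ, n.natAbs * a < q ((T.toEquiv ^ n) x)}
      ⊆ {x | ∃ n : ℕ, n * a < q (T^[n] x)} ∪ {x | ∃ n : ℕ, n * a < q (T.symm^[n] x)} := by
    rintro x ⟨n, hn⟩
    obtain ⟨m, rfl | rfl⟩ := n.eq_nat_or_neg
    · rw [Int.natAbs_natCast, zpow_natCast, Equiv.Perm.coe_pow] at hn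
      exact .inl ⟨m, hn⟩
    · rw [Int.natAbs_neg, Int.natAbs_natCast, zpow_neg, zpow_natCast, ← inv_pow,
        Equiv.Perm.coe_pow] at hn
      exact .inr ⟨m, hn⟩
  have hq_inv (x : Ω) : q (T.symm x) ≤ q x + c := by
    simpa only [T.apply_symm_apply] using hq_symm (T.symm x)
  calc a * μ {x | ∃ n : ℤ, n.natAbs * a < q ((T.toEquiv ^ n) x)}
      ≤ a * μ {x | ∃ n : ℕ, n * a < q (T^[n] x)}
          + a * μ {x | ∃ n : ℕ, n * a < q (T.symm^[n] x)} := by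
        rw [← mul_add]
        gcongr
        exact (measure_mono h_subset).trans (measure_union_le _ _)
    _ ≤ (a + c) * μ {x | 0 < q x} + (a + c) * μ {x | 0 < q x} := by
        exact add_le_add (mul_measure_exists_nat_mul_lt_apply_iterate_le hT hqm hq a)
          (mul_measure_exists_nat_mul_lt_apply_iterate_le (hT.symm T) hqm hq_inv a)
    _ = 2 * (a + c) * μ {x | 0 < q x} := by ring

end BoundedIncrements

section TemperedEnvelope

variable {Ω : Type*} {P : Ω → ℝ} {t : ℝ}

/-- The `ε`-tempered envelope `x ↦ sup_{n ∈ ℤ} exp (-|n| ε) P (Tⁿ x)` of a positive function `P`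
along the orbits of `T`, with values in `ℝ≥0∞` because the supremum may be infinite. -/
noncomputable def temperedEnvelope (T : Equiv.Perm Ω) (ε : ℝ) (P : Ω → ℝ) (x : Ω) : ℝ≥0∞ :=
  ⨆ n : ℤ, ENNReal.ofReal (Real.exp (-|(n : ℝ)| * ε) * P ((T ^ n) x))

lemma lt_exp_neg_mul_iff_lt_log_div {r p : ℝ} (ht : 0 < t) (hp : 0 < p) :
    t < Real.exp (-r) * p ↔ r < Real.log (p / t) := by
  rw [Real.lt_log_iff_exp_lt (div_pos hp ht), lt_div_iff₀ ht, Real.exp_neg, inv_mul_eq_div,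
    lt_div_iff₀ (Real.exp_pos r), mul_comm]

lemma ofReal_lt_temperedEnvelope_iff {T : Equiv.Perm Ω} {ε : ℝ} {x : Ω} (hε : 0 ≤ ε) (ht : 0 < t)
    (hP : ∀ x, 0 < P x) :
    ENNReal.ofReal t < temperedEnvelope T ε P x ↔
      ∃ n : ℤ, n.natAbs * ENNReal.ofReal ε < ENNReal.ofReal (Real.log (P ((T ^ n) x) / t)) := by
  simp only [temperedEnvelope, lt_iSup_iff]
  refine exists_congr fun n => ?_
  rw [ENNReal.ofReal_lt_ofReal_iff_of_nonneg ht.le, neg_mul,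
    lt_exp_neg_mul_iff_lt_log_div ht (hP _), ← ENNReal.ofReal_natCast, Nat.cast_natAbs,
    Int.cast_abs, ← ENNReal.ofReal_mul (abs_nonneg _),
    ENNReal.ofReal_lt_ofReal_iff_of_nonneg (by positivity)]

lemma ofReal_log_div_le_add {x y c : ℝ} (ht : 0 < t) (hx : 0 < x) (hy : 0 < y)
    (hxy : y / x ≤ Real.exp c) :
    ENNReal.ofReal (Real.log (y / t)) ≤ ENNReal.ofReal (Real.log (x / t)) + ENNReal.ofReal c := by
  refine (ENNReal.ofReal_le_ofReal ?_).trans ENNReal.ofReal_add_le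
  have h_log := (Real.log_le_iff_le_exp (div_pos hy hx)).2 hxy
  rw [Real.log_div hy.ne' hx.ne'] at h_log
  rw [Real.log_div hy.ne' ht.ne', Real.log_div hx.ne' ht.ne']
  linarith

lemma two_mul_ofReal_add_ofReal_le {ε : ℝ} (hε : 0 < ε) (c : ℝ) :
    2 * (ENNReal.ofReal ε + ENNReal.ofReal c)
      ≤ ENNReal.ofReal ε * ENNReal.ofReal (4 * max (c / ε) 1) := by
  have hc : c ≤ ε * max (c / ε) 1 := (div_le_iff₀' hε).1 (le_max_left _ _)
  have hε' : ε ≤ ε * max (c / ε) 1 := le_mul_of_one_le_right hε.le (le_max_right _ _)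
  calc 2 * (ENNReal.ofReal ε + ENNReal.ofReal c)
      ≤ 2 * (ENNReal.ofReal (ε * max (c / ε) 1) + ENNReal.ofReal (ε * max (c / ε) 1)) := by gcongr
    _ = ENNReal.ofReal ε * ENNReal.ofReal (4 * max (c / ε) 1) := by
        rw [ENNReal.ofReal_mul hε.le, ENNReal.ofReal_mul zero_le_four, ENNReal.ofReal_ofNat]
        ring

theorem stmt9_general [MeasurableSpace Ω] {ν : Measure Ω} {T : Ω ≃ᵐ Ω}
    (hT : MeasurePreserving T ν ν) (hPmeas : Measurable P) (hPpos : ∀ x, 0 < P x)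
    {ε c₀ : ℝ} (hε : 0 < ε)
    (hratio : ∀ x, Real.exp (-c₀) ≤ P (T x) / P x ∧ P (T x) / P x ≤ Real.exp c₀) (ht : 0 < t) :
    ν {x | ENNReal.ofReal t < temperedEnvelope T.toEquiv ε P x}
      ≤ ENNReal.ofReal (4 * max (c₀ / ε) 1) * ν {x | t < P x} := by
  set q : Ω → ℝ≥0∞ := fun x => ENNReal.ofReal (Real.log (P x / t))
  have hqm : Measurable q := (hPmeas.div_const t).log.ennreal_ofReal
  have hq (x : Ω) : q (T x) ≤ q x + ENNReal.ofReal c₀ :=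
    ofReal_log_div_le_add ht (hPpos _) (hPpos _) (hratio x).2
  have hq_symm (x : Ω) : q x ≤ q (T x) + ENNReal.ofReal c₀ := by
    refine ofReal_log_div_le_add ht (hPpos _) (hPpos _) ?_
    rw [← inv_div, ← neg_neg c₀, Real.exp_neg]
    exact inv_anti₀ (Real.exp_pos _) (hratio x).1
  have hq_pos (x : Ω) : 0 < q x ↔ t < P x := by
    rw [ENNReal.ofReal_pos, Real.log_pos_iff (div_pos (hPpos x) ht).le, one_lt_div ht]
  have hε_pos : ENNReal.ofReal ε ≠ 0 := (ENNReal.ofReal_pos.2 hε).ne'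
  simp only [ofReal_lt_temperedEnvelope_iff hε.le ht hPpos, ← hq_pos]
  rw [← ENNReal.mul_le_mul_iff_right hε_pos ENNReal.ofReal_ne_top, ← mul_assoc]
  exact (mul_measure_exists_int_mul_lt_apply_zpow_le hT hqm hq hq_symm _).trans <|
    mul_le_mul_left (two_mul_ofReal_add_ofReal_le hε c₀) _

end TemperedEnvelope

/-- Distribution estimate for the ε-tempered envelope: let `(Ω, ν)` be a
probability space, `T : Ω ≃ᵐ Ω` an invertible ergodic measure-preserving transformation, and
`P : Ω → (0, ∞)` measurable. Fix `ε > 0` and let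
`P_ε(x) := sup_{n∈ℤ} exp(−|n| ε) · P(Tⁿ x)`. If `exp(−c₀) ≤ P(T x)/P(x) ≤ exp c₀` for every
`x`, with `c₀ > 0`, then for every `t > 0`,
`ν { x : P_ε(x) > t } ≤ 4 · max(c₀/ε, 1) · ν { x : P(x) > t }`. -/
theorem stmt9 {Ω : Type*} [MeasurableSpace Ω] (ν : Measure Ω) [IsProbabilityMeasure ν]
    (T : Ω ≃ᵐ Ω) (hT : Ergodic (⇑T) ν)
    (P : Ω → ℝ) (hPmeas : Measurable P) (hPpos : ∀ x, 0 < P x)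
    (ε : ℝ) (hε : 0 < ε)
    (c₀ : ℝ) (hc₀ : 0 < c₀)
    (hratio : ∀ x, Real.exp (-c₀) ≤ P (T x) / P x ∧ P (T x) / P x ≤ Real.exp c₀) :
    ∀ t : ℝ, 0 < t →
      ν {x | ENNReal.ofReal t
          < ⨆ n : ℤ, ENNReal.ofReal (Real.exp (-|(n : ℝ)| * ε) * P ((T.toEquiv ^ n) x))}
        ≤ ENNReal.ofReal (4 * max (c₀ / ε) 1) * ν {x | t < P x} := by
  intro t ht
  exact stmt9_general hT.toMeasurePreserving hPmeas hPpos hε hratio ht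
end

section
/- Let X be a measurable space and let 𝒜 = (A_1, …, A_p) and ℬ = (B_1, …, B_q) be finite measurable partitions of X (finite families of pairwise disjoint measurable sets whose unions are X). For a finite measure μ on X define the conditional entropy H_μ(𝒜 | ℬ) := ∑_{i=1}^{p} ∑_{j=1}^{q} μ(A_i ∩ B_j) · (log μ(B_j) − log μ(A_i ∩ B_j)), with the convention that summands with μ(A_i ∩ B_j) = 0 are taken to be 0. Then for any two finite measures μ₁, μ₂ on X, H_{μ₁ + μ₂}(𝒜 | ℬ) ≥ H_{μ₁}(𝒜 | ℬ) + H_{μ₂}(𝒜 | ℬ). -/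
open MeasureTheory

/-- Conditional entropy `H_μ(𝒜 | ℬ) = ∑_{i,j} μ(A_i ∩ B_j)·(log μ(B_j) − log μ(A_i ∩ B_j))`
of the finite partition `𝒜` with respect to the finite partition `ℬ`, for a finite measure
`μ` (with the convention that summands with `μ(A_i ∩ B_j) = 0` vanish, via `log 0 = 0` and
`0 · x = 0`). -/
noncomputable def condEntropyFin {X : Type*} [MeasurableSpace X] (μ : Measure X)
    {p q : ℕ} (A : Fin p → Set X) (B : Fin q → Set X) : ℝ :=
  ∑ i, ∑ j, (μ (A i ∩ B j)).toReal *
    (Real.log (μ (B j)).toReal - Real.log (μ (A i ∩ B j)).toReal)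

/-!
With `η t = -t log t`, each summand is the perspective `μ(B) η (μ(A ∩ B) / μ(B))` of the concave
function `η`. Jensen's inequality makes the perspective superadditive in the pair
`(μ(A ∩ B), μ(B))` (the log-sum inequality), and this pair is additive in `μ`.
-/

theorem mul_log_sub_log_eq_mul_negMulLog_div {a b : ℝ} (hab : b = 0 → a = 0) :
    a * (Real.log b - Real.log a) = b * Real.negMulLog (a / b) := by
  rcases eq_or_ne a 0 with rfl | ha
  · simp
  · have hb : b ≠ 0 := mt hab ha
    rw [Real.negMulLog, Real.log_div ha hb]
    field_simp
    ring

theorem sum_mul_log_sub_log_le_sum_mul_log_sum_sub_log_sum {ι : Type*} {s : Finset ι} {a b : ι → ℝ}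
    (ha : ∀ i ∈ s, 0 ≤ a i) (hb : ∀ i ∈ s, 0 ≤ b i) (hab : ∀ i ∈ s, b i = 0 → a i = 0) :
    ∑ i ∈ s, a i * (Real.log (b i) - Real.log (a i)) ≤
      (∑ i ∈ s, a i) * (Real.log (∑ i ∈ s, b i) - Real.log (∑ i ∈ s, a i)) := by
  have hsum : ∑ i ∈ s, b i = 0 → ∑ i ∈ s, a i = 0 := fun h ↦
    Finset.sum_eq_zero fun i hi ↦ hab i hi ((Finset.sum_eq_zero_iff_of_nonneg hb).1 h i hi)
  rw [mul_log_sub_log_eq_mul_negMulLog_div hsum,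
    Finset.sum_congr rfl fun i hi ↦ mul_log_sub_log_eq_mul_negMulLog_div (hab i hi)]
  rcases (Finset.sum_nonneg hb).eq_or_lt with hzero | hpos
  · have hb_zero := (Finset.sum_eq_zero_iff_of_nonneg hb).1 hzero.symm
    rw [← hzero, zero_mul, Finset.sum_eq_zero fun i hi ↦ by rw [hb_zero i hi, zero_mul]]
  · have hcenter : s.centerMass b (fun i ↦ a i / b i) = (∑ i ∈ s, a i) / ∑ i ∈ s, b i := by
      rw [Finset.centerMass, smul_eq_mul, inv_mul_eq_div]
      exact congrArg (· / _) (Finset.sum_congr rfl fun i hi ↦ mul_div_cancel_of_imp' (hab i hi))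
    have hjensen : s.centerMass b (fun i ↦ Real.negMulLog (a i / b i)) ≤
        Real.negMulLog (s.centerMass b fun i ↦ a i / b i) :=
      Real.concaveOn_negMulLog.le_map_centerMass hb hpos
        fun i hi ↦ div_nonneg (ha i hi) (hb i hi)
    rwa [hcenter, Finset.centerMass, smul_eq_mul, inv_mul_le_iff₀ hpos] at hjensen

theorem mul_log_sub_log_add_mul_log_sub_log_le {a₁ a₂ b₁ b₂ : ℝ} (ha₁ : 0 ≤ a₁) (ha₂ : 0 ≤ a₂)
    (hb₁ : 0 ≤ b₁) (hb₂ : 0 ≤ b₂) (hab₁ : b₁ = 0 → a₁ = 0) (hab₂ : b₂ = 0 → a₂ = 0) :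
    a₁ * (Real.log b₁ - Real.log a₁) + a₂ * (Real.log b₂ - Real.log a₂) ≤
      (a₁ + a₂) * (Real.log (b₁ + b₂) - Real.log (a₁ + a₂)) := by
  simpa [Fin.sum_univ_two] using
    sum_mul_log_sub_log_le_sum_mul_log_sum_sub_log_sum
      (s := Finset.univ) (a := ![a₁, a₂]) (b := ![b₁, b₂])
      (by simp [Fin.forall_fin_two, ha₁, ha₂]) (by simp [Fin.forall_fin_two, hb₁, hb₂])
      (by simpa [Fin.forall_fin_two] using ⟨hab₁, hab₂⟩)

theorem stmt10_general {X : Type*} [MeasurableSpace X]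
    {p q : ℕ} (A : Fin p → Set X) (B : Fin q → Set X)
    (μ₁ μ₂ : Measure X) [IsFiniteMeasure μ₁] [IsFiniteMeasure μ₂] :
    condEntropyFin μ₁ A B + condEntropyFin μ₂ A B ≤ condEntropyFin (μ₁ + μ₂) A B := by
  simp only [condEntropyFin, ← measureReal_def, ← Finset.sum_add_distrib]
  refine Finset.sum_le_sum fun i _ ↦ Finset.sum_le_sum fun j _ ↦ ?_
  have hnull (μ : Measure X) [IsFiniteMeasure μ] : μ.real (B j) = 0 → μ.real (A i ∩ B j) = 0 :=
    fun h ↦ measureReal_mono_null Set.inter_subset_right h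
  rw [measureReal_add_apply, measureReal_add_apply]
  exact mul_log_sub_log_add_mul_log_sub_log_le measureReal_nonneg measureReal_nonneg
    measureReal_nonneg measureReal_nonneg (hnull μ₁) (hnull μ₂)

/-- Super-additivity of conditional entropy with respect to addition of
finite measures: for finite measurable partitions `𝒜 = (A_i)`, `ℬ = (B_j)` of `X` and finite
measures `μ₁, μ₂`, one has `H_{μ₁+μ₂}(𝒜 | ℬ) ≥ H_{μ₁}(𝒜 | ℬ) + H_{μ₂}(𝒜 | ℬ)`. -/
theorem stmt10 {X : Type*} [MeasurableSpace X]
    {p q : ℕ} (A : Fin p → Set X) (B : Fin q → Set X)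
    (hAmeas : ∀ i, MeasurableSet (A i)) (hBmeas : ∀ j, MeasurableSet (B j))
    (hAdis : Pairwise (Function.onFun Disjoint A))
    (hBdis : Pairwise (Function.onFun Disjoint B))
    (hAcov : ⋃ i, A i = Set.univ) (hBcov : ⋃ j, B j = Set.univ)
    (μ₁ μ₂ : Measure X) [IsFiniteMeasure μ₁] [IsFiniteMeasure μ₂] :
    condEntropyFin μ₁ A B + condEntropyFin μ₂ A B ≤ condEntropyFin (μ₁ + μ₂) A B :=
  stmt10_general A B μ₁ μ₂
end

section
/- Let X be a measurable space and let 𝒜 = (A_1, …, A_p) and ℬ = (B_1, …, B_q) be finite measurable partitions of X (finite families of pairwise disjoint measurable sets whose unions are X). For a finite measure μ on X define the conditional entropy H_μ(𝒜 | ℬ) := ∑_{i=1}^{p} ∑_{j=1}^{q} μ(A_i ∩ B_j) · (log μ(B_j) − log μ(A_i ∩ B_j)), with the convention that summands with μ(A_i ∩ B_j) = 0 are taken to be 0. Then for any two finite measures μ₁, μ₂ on X with μ₂ ≤ μ₁ (that is, μ₂(S) ≤ μ₁(S) for every measurable S), one has H_{μ₁}(𝒜 | ℬ) ≥ H_{μ₂}(𝒜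 | ℬ). -/
open MeasureTheory

/-!
The function `(a, t) ↦ a * log (t / a)` is concave and homogeneous of degree one, hence
superadditive, and it is nonnegative for `0 ≤ a ≤ t`. Applied to `a = μ(A_i ∩ B_j)` and
`t = μ(B_j)`, this makes every summand of `H_μ(𝒜 | ℬ)`, and therefore `H_μ(𝒜 | ℬ)` itself,
nonnegative and superadditive in `μ`. So `H_{μ₁} ≥ H_{μ₁ - μ₂} + H_{μ₂} ≥ H_{μ₂}`.
-/

/-- The contribution `a * log (t / a)` to a conditional entropy of a cell of mass `a` inside a
conditioning cell of mass `t`. The logarithm of the quotient is split as in `condEntropyFin`. -/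
noncomputable def entropySummand (a t : ℝ) : ℝ :=
  a * (Real.log t - Real.log a)

section EntropySummand

variable {a b t u : ℝ}

lemma entropySummand_nonneg (ha : 0 ≤ a) (hat : a ≤ t) : 0 ≤ entropySummand a t := by
  rcases ha.eq_or_lt with rfl | ha_pos
  · simp [entropySummand]
  · exact mul_nonneg ha (sub_nonneg.2 (Real.log_le_log ha_pos hat))

-- The right-hand side is the tangent plane of `entropySummand` at `(b, u)`.
lemma entropySummand_le_tangent (ha : 0 ≤ a) (hat : a ≤ t) (hb : 0 < b) (hu : 0 < u) :
    entropySummand a t ≤ a * (Real.log u - Real.log b) + (t * (b / u) - a) := by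
  rcases ha.eq_or_lt with rfl | ha_pos
  · have : 0 ≤ t * (b / u) := by positivity
    simpa [entropySummand] using this
  · have ht : 0 < t := ha_pos.trans_le hat
    have log_ratio_le : Real.log (t * b / (a * u)) ≤ t * b / (a * u) - 1 :=
      Real.log_le_sub_one_of_pos (by positivity)
    rw [Real.log_div (by positivity) (by positivity), Real.log_mul ht.ne' hb.ne',
      Real.log_mul ha_pos.ne' hu.ne'] at log_ratio_le
    calc entropySummand a t
        = a * (Real.log u - Real.log b)
            + a * (Real.log t + Real.log b - (Real.log a + Real.log u)) := by
          unfold entropySummand; ring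
      _ ≤ a * (Real.log u - Real.log b) + a * (t * b / (a * u) - 1) := by gcongr
      _ = a * (Real.log u - Real.log b) + (t * (b / u) - a) := by field_simp

lemma entropySummand_add_le (ha : 0 ≤ a) (hat : a ≤ t) (hb : 0 ≤ b) (hbu : b ≤ u) :
    entropySummand a t + entropySummand b u ≤ entropySummand (a + b) (t + u) := by
  rcases (add_nonneg ha hb).eq_or_lt with hab | hab
  · obtain ⟨rfl, rfl⟩ := (add_eq_zero_iff_of_nonneg ha hb).1 hab.symm
    simp [entropySummand]
  · have htu : 0 < t + u := hab.trans_le (add_le_add hat hbu)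
    have tangents_sum : t * ((a + b) / (t + u)) + u * ((a + b) / (t + u)) = a + b := by
      rw [← add_mul, mul_div_cancel₀ _ htu.ne']
    have tangent_a := entropySummand_le_tangent ha hat hab htu
    have tangent_b := entropySummand_le_tangent hb hbu hab htu
    calc entropySummand a t + entropySummand b u
        ≤ (a + b) * (Real.log (t + u) - Real.log (a + b)) := by linarith
      _ = entropySummand (a + b) (t + u) := rfl

end EntropySummand

section CondEntropyFin

variable {X : Type*} [MeasurableSpace X] {p q : ℕ}

lemma condEntropyFin_eq_sum_entropySummand (μ : Measure X) (A : Fin p → Set X)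
    (B : Fin q → Set X) :
    condEntropyFin μ A B = ∑ i, ∑ j, entropySummand (μ.real (A i ∩ B j)) (μ.real (B j)) :=
  rfl

lemma condEntropyFin_nonneg (μ : Measure X) [IsFiniteMeasure μ] (A : Fin p → Set X)
    (B : Fin q → Set X) : 0 ≤ condEntropyFin μ A B :=
  Finset.sum_nonneg fun _ _ => Finset.sum_nonneg fun _ _ =>
    entropySummand_nonneg measureReal_nonneg (measureReal_mono Set.inter_subset_right)

lemma condEntropyFin_add_le (μ ν : Measure X) [IsFiniteMeasure μ] [IsFiniteMeasure ν]
    (A : Fin p → Set X) (B : Fin q → Set X) :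
    condEntropyFin μ A B + condEntropyFin ν A B ≤ condEntropyFin (μ + ν) A B := by
  simp only [condEntropyFin_eq_sum_entropySummand, ← Finset.sum_add_distrib]
  gcongr
  rw [measureReal_add_apply, measureReal_add_apply]
  exact entropySummand_add_le
    measureReal_nonneg (measureReal_mono Set.inter_subset_right)
    measureReal_nonneg (measureReal_mono Set.inter_subset_right)

theorem stmt11_general (A : Fin p → Set X) (B : Fin q → Set X) (μ₁ μ₂ : Measure X)
    [IsFiniteMeasure μ₁] (hle : μ₂ ≤ μ₁) :
    condEntropyFin μ₂ A B ≤ condEntropyFin μ₁ A B := by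
  have : IsFiniteMeasure μ₂ := isFiniteMeasure_of_le μ₁ hle
  calc condEntropyFin μ₂ A B
      ≤ condEntropyFin (μ₁ - μ₂) A B + condEntropyFin μ₂ A B :=
        le_add_of_nonneg_left (condEntropyFin_nonneg _ A B)
    _ ≤ condEntropyFin (μ₁ - μ₂ + μ₂) A B := condEntropyFin_add_le _ _ A B
    _ = condEntropyFin μ₁ A B := by rw [Measure.sub_add_cancel_of_le hle]

end CondEntropyFin

/-- Monotonicity of conditional entropy with respect to the pointwise order
on finite measures: for finite measurable partitions `𝒜 = (A_i)`, `ℬ = (B_j)` of `X` and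
finite measures `μ₂ ≤ μ₁`, one has `H_{μ₁}(𝒜 | ℬ) ≥ H_{μ₂}(𝒜 | ℬ)`. -/
theorem stmt11 {X : Type*} [MeasurableSpace X]
    {p q : ℕ} (A : Fin p → Set X) (B : Fin q → Set X)
    (hAmeas : ∀ i, MeasurableSet (A i)) (hBmeas : ∀ j, MeasurableSet (B j))
    (hAdis : Pairwise (Function.onFun Disjoint A))
    (hBdis : Pairwise (Function.onFun Disjoint B))
    (hAcov : ⋃ i, A i = Set.univ) (hBcov : ⋃ j, B j = Set.univ)
    (μ₁ μ₂ : Measure X) [IsFiniteMeasure μ₁] [IsFiniteMeasure μ₂]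
    (hle : μ₂ ≤ μ₁) :
    condEntropyFin μ₂ A B ≤ condEntropyFin μ₁ A B :=
  stmt11_general A B μ₁ μ₂ hle
end
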